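/- arXiv:1903.05802 — 3 statements merged into one kernel-verified Lean document; each statement's English description precedes it below -/
import Mathlib

section
/- Let σ_ℓ σ_{ℓ−1} ⋯ σ_1 be a strictly increasing word (read left to right) and let x be a letter with x < σ_ℓ, such that σ_ℓ x σ_{ℓ−1} ⋯ σ_1 is a reduced word. Then σ_ℓ x σ_{ℓ−1} ⋯ σ_1 is Coxeter–Knuth equivalent to σ_ℓ σ_{ℓ−1} ⋯ σ_1 x. -/
open List

namespace EG

/-! ## Words, permutations, and reduced words.

A word is a list of positive natural numbers `(ρ_ℓ, …, ρ_1)`, read left to right,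
representing the product of simple transpositions `s_{ρ_ℓ} ⋯ s_{ρ_1}`. -/

/-- The permutation of `ℕ` represented by a word. -/
def toPerm (ρ : List ℕ) : Equiv.Perm ℕ :=
  (ρ.map fun i => Equiv.swap i (i + 1)).prod

/-- `ρ` is a reduced word: its letters are positive, and no shorter word represents
the same permutation. -/
def IsReducedWord (ρ : List ℕ) : Prop :=
  (∀ i ∈ ρ, 1 ≤ i) ∧
    ∀ σ : List ℕ, (∀ i ∈ σ, 1 ≤ i) → toPerm σ = toPerm ρ → ρ.length ≤ σ.length

/-- `ρ` is a reduced word for the permutation `w`. -/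
def ReducedWordFor (ρ : List ℕ) (w : Equiv.Perm ℕ) : Prop :=
  IsReducedWord ρ ∧ toPerm ρ = w

/-! ## Elementary Coxeter–Knuth relations. -/

/-- The elementary Coxeter–Knuth move on a consecutive triple
`(a, b, c) = (ρ_{i+1}, ρ_i, ρ_{i−1})`. -/
def ckTriple (a b c : ℕ) : ℕ × ℕ × ℕ :=
  if a = c then (b, a, b)
  else if (c > a ∧ a > b) ∨ (c < a ∧ a < b) then (a, c, b)
  else if (a > c ∧ c > b) ∨ (a < c ∧ c < b) then (b, a, c)
  else (a, b, c)

/-- The elementary Coxeter–Knuth relation `𝔡_i`, acting on the letters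
`ρ_{i+1} ρ_i ρ_{i−1}` of a word `ρ = (ρ_ℓ, …, ρ_1)` (indexed from the right). -/
def ckMove (i : ℕ) (ρ : List ℕ) : List ℕ :=
  if 2 ≤ i ∧ i + 1 ≤ ρ.length then
    let p := ρ.length - i - 1
    let t := ckTriple (ρ.getD p 0) (ρ.getD (p + 1) 0) (ρ.getD (p + 2) 0)
    ((ρ.set p t.1).set (p + 1) t.2.1).set (p + 2) t.2.2
  else ρ

/-- Two words are Coxeter–Knuth equivalent if one is obtained from the other by a
finite sequence of elementary Coxeter–Knuth relations. -/
def CKEquiv (ρ σ : List ℕ) : Prop :=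
  ∃ ms : List ℕ, σ = ms.foldl (fun w i => ckMove i w) ρ

/-! ## Run decompositions and descent tableaux. -/

/-- Split a list into maximal blocks, breaking between consecutive letters `a`, `b`
whenever `brk a b` holds. -/
def splitWhen (brk : ℕ → ℕ → Bool) : List ℕ → List (List ℕ)
  | [] => []
  | [a] => [[a]]
  | a :: b :: rest =>
    match splitWhen brk (b :: rest) with
    | r :: rs => if brk a b then [a] :: r :: rs else (a :: r) :: rs
    | [] => [[a]]

/-- The run decomposition of a word into maximal strictly increasing runs, listed
left to right (so the list is `[ρ⁽ᵏ⁾, …, ρ⁽¹⁾]`, with `ρ⁽¹⁾` the final run). -/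
def runs (ρ : List ℕ) : List (List ℕ) := splitWhen (fun a b => decide (b ≤ a)) ρ

/-- The rows of the descent tableau `𝔻(ρ)`, listed bottom to top:
`[ρ⁽¹⁾, …, ρ⁽ᵏ⁾]`. -/
def rowsOf (ρ : List ℕ) : List (List ℕ) := (runs ρ).reverse

/-- The row reading word of a tableau whose rows are listed bottom to top:
read rows left to right, starting with the top row. -/
def wordOf (R : List (List ℕ)) : List ℕ := R.reverse.flatten

/-- The descent composition `Des(ρ) = (|ρ⁽¹⁾|, …, |ρ⁽ᵏ⁾|)`. -/
def DesComp (ρ : List ℕ) : List ℕ := (rowsOf ρ).map List.length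

/-- A list of rows (bottom to top) is an increasing Young tableau of partition shape:
rows strictly increase left to right, shape is a partition, and columns strictly
increase bottom to top. -/
def IsIncreasingYoungRows (R : List (List ℕ)) : Prop :=
  (∀ r ∈ R, r.Chain' (· < ·)) ∧
    R.Chain' (fun lo hi => hi.length ≤ lo.length ∧
      ∀ j < hi.length, lo.getD j 0 < hi.getD j 0)

/-! ## The drop map on a pair of increasing rows. -/

/-- Increment the first `n` letters of a list by `1`. -/
def incFirst : ℕ → List ℕ → List ℕ
  | 0, l => l
  | _ + 1, [] => []
  | n + 1, a :: l => (a + 1) :: incFirst n l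

/-- Decrement the first `n` letters of a list by `1`. -/
def decFirst : ℕ → List ℕ → List ℕ
  | 0, l => l
  | _ + 1, [] => []
  | n + 1, a :: l => (a - 1) :: decFirst n l

/-- `bCount t1 i [s_i, s_{i+1}, …]` is the largest `b` with `t1 = s_j + j` for all
`i ≤ j < i + b`. -/
def bCount (t1 : ℕ) : ℕ → List ℕ → ℕ
  | _, [] => 0
  | i, s :: rest => if t1 = s + i then bCount t1 (i + 1) rest + 1 else 0

/-- Index of the first failure `τ_j ≤ σ_j` in the drop alignment of `σ` below `τ`. -/
def failIdx (τ σ : List ℕ) : Option ℕ :=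
  (τ.zip σ).findIdx? (fun p => decide (p.1 ≤ p.2))

/-- Fueled computation of the drop of the row `σ` below the row `τ`, returning the
new pair (top row, bottom row). -/
def dropPairAux : ℕ → List ℕ → List ℕ → List ℕ × List ℕ
  | 0, τ, σ => (τ, σ)
  | fuel + 1, τ, σ =>
    match failIdx τ σ with
    | none =>
      if σ.length < τ.length then (τ.take σ.length, σ ++ τ.drop σ.length)
      else (τ, σ)
    | some j =>
      let x := τ.getD j 0
      let τr := τ.drop (j + 1)
      let σr := σ.drop j
      let res := dropPairAux fuel τr σr
      let l1 := (failIdx τr σr).getD τr.length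
      let b := if l1 = 0 then 0
               else if x + 1 = τr.headD 0 then bCount (τr.headD 0) 1 (σr.take l1) else 0
      (τ.take j ++ res.1, σ.take j ++ x :: incFirst b res.2)

/-- The drop of the row `σ` below the row `τ`: the pair (new top row, new bottom row). -/
def dropPair (τ σ : List ℕ) : List ℕ × List ℕ := dropPairAux (τ.length + 1) τ σ

/-- The word `drop(τσ)`. -/
def dropW (τ σ : List ℕ) : List ℕ := (dropPair τ σ).1 ++ (dropPair τ σ).2

/-- Apply `drop` to rows `i` and `i+1` (1-indexed from the bottom) of a list of rows. -/
def dropAt : ℕ → List (List ℕ) → List (List ℕ)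
  | 1, σr :: τr :: rest => (dropPair τr σr).2 :: (dropPair τr σr).1 :: rest
  | n + 2, r :: R => r :: dropAt (n + 1) R
  | _, R => R

/-- The map `drop_i` on words: replace the runs `ρ⁽ⁱ⁺¹⁾ ρ⁽ⁱ⁾` of the run
decomposition by `drop(ρ⁽ⁱ⁺¹⁾ ρ⁽ⁱ⁾)`. -/
def dropWordAt (i : ℕ) (ρ : List ℕ) : List ℕ := wordOf (dropAt i (rowsOf ρ))

/-- One sweep of all the maps `drop_i`. -/
def sweepDrop (ρ : List ℕ) : List ℕ :=
  (List.range (runs ρ).length).foldl (fun w i => dropWordAt (i + 1) w) ρ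

/-- The drop `drop(ρ)` of a word: repeatedly apply the maps `drop_i` until reaching
the fixed point (an increasing Young tableau). -/
def dropFull (ρ : List ℕ) : List ℕ := sweepDrop^[ρ.length * ρ.length + 1] ρ

/-! ## The lift map on a pair of increasing rows. -/

/-- `bCount2 x i τblk σblk` is the largest `b` with `τ_j = σ_j = x + j` for all
`i ≤ j < i + b`. -/
def bCount2 (x : ℕ) : ℕ → List ℕ → List ℕ → ℕ
  | i, t :: ts, s :: ss =>
      if t = x + i ∧ s = x + i then bCount2 x (i + 1) ts ss + 1 else 0
  | _, _, _ => 0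

/-- Index of the first failure (from the right) in the lift alignment of `τ` above
`σ`: here both rows are given reversed. -/
def liftFailIdx (τR σR : List ℕ) : Option ℕ :=
  (τR.zip σR).findIdx? (fun p => decide (p.1 < p.2))

/-- Fueled computation of the lift of the row `τ` above the row `σ`, on reversed
rows; returns the new (top row, bottom row), reversed. -/
def liftPairAuxR : ℕ → List ℕ → List ℕ → List ℕ × List ℕ
  | 0, τR, σR => (τR, σR)
  | fuel + 1, τR, σR =>
    match liftFailIdx τR σR with
    | none => (τR, σR)
    | some j =>
      let x := σR.getD j 0
      let τr := τR.drop j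
      let σr := σR.drop (j + 1)
      let res := liftPairAuxR fuel τr σr
      let τblk := (τR.take j).reverse
      let σblk := (σR.take j).reverse
      let b := if σblk.headD 0 = x + 1 then bCount2 x 1 τblk σblk else 0
      (τR.take j ++ x :: res.1, (decFirst b σblk).reverse ++ res.2)

/-- Check that the lift alignment leaves no unmatched letters of `σ` (no letter of
`σ` other than the `x_j`'s lacks a letter of `τ` above it); when some letter is
left over, the lift acts trivially. -/
def liftOkAux : ℕ → List ℕ → List ℕ → Bool
  | 0, _, _ => true
  | fuel + 1, τR, σR =>
    match liftFailIdx τR σR with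
    | none => σR.length ≤ τR.length
    | some j => liftOkAux fuel (τR.drop j) (σR.drop (j + 1))

/-- The lift of the row `τ` above the row `σ`: the pair (new top row, new bottom row). -/
def liftPair (τ σ : List ℕ) : List ℕ × List ℕ :=
  if liftOkAux (σ.length + 1) τ.reverse σ.reverse then
    let r := liftPairAuxR (σ.length + 1) τ.reverse σ.reverse
    (r.1.reverse, r.2.reverse)
  else (τ, σ)

/-- The word `lift(τσ)`. -/
def liftW (τ σ : List ℕ) : List ℕ := (liftPair τ σ).1 ++ (liftPair τ σ).2

/-- Apply `lift` to rows `i` and `i+1` (1-indexed from the bottom) of a list of rows. -/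
def liftAt : ℕ → List (List ℕ) → List (List ℕ)
  | 1, σr :: τr :: rest => (liftPair τr σr).2 :: (liftPair τr σr).1 :: rest
  | n + 2, r :: R => r :: liftAt (n + 1) R
  | _, R => R

/-- The lifting sequence `lift_{[i,j]} = lift_j ∘ ⋯ ∘ lift_i`. -/
def liftSeq (i j : ℕ) (T : List (List ℕ)) : List (List ℕ) :=
  (List.range' i (j + 1 - i)).foldl (fun t k => liftAt k t) T

/-- Fueled check that `lift_i, lift_{i+1}, …` all act faithfully, for `n` steps. -/
def faithfulAux : ℕ → ℕ → List (List ℕ) → Bool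
  | 0, _, _ => false
  | n + 1, i, T =>
    let T' := liftAt i T
    if T' = T then false
    else if n = 0 then true
    else faithfulAux n (i + 1) T'

/-- The lifting sequence `lift_{[i,j]}` acts faithfully on `T`. -/
def faithfulSeq (i j : ℕ) (T : List (List ℕ)) : Bool :=
  if i ≤ j then faithfulAux (j + 1 - i) i T else false

/-- Find the canonical move: the maximal `j` admitting some `i ≤ j` with
`lift_{[i,j]}` faithful, together with the minimal such `i`. -/
def findMove (T : List (List ℕ)) : Option (ℕ × ℕ) :=
  (List.range (T.length + 1)).reverse.findSome? (fun j =>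
    ((List.range' 1 j).find? (fun i => faithfulSeq i j T)).map (fun i => (i, j)))

/-- Fueled canonical lifting loop. -/
def liftCanonAux : ℕ → List (List ℕ) → List (List ℕ)
  | 0, T => T
  | fuel + 1, T =>
    match findMove T with
    | none => T
    | some ij => liftCanonAux fuel (liftSeq ij.1 ij.2 T)

/-- The canonical lifting algorithm applied to a tableau (rows bottom to top). -/
def liftCanon (T : List (List ℕ)) : List (List ℕ) :=
  liftCanonAux (T.flatten.length * T.length + 1) T

/-- The word `lift(ρ)`: the row reading word of the canonical lift of `𝔻(ρ)`. -/
def liftWord (ρ : List ℕ) : List ℕ := wordOf (liftCanon (rowsOf ρ))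

/-! ## Weak descent compositions. -/

/-- From the list of minima `[r_k, …, r_1]` of the runs (topmost first), compute
`[r̂_k, …, r̂_1]` where `r̂_k = r_k` and `r̂_i = min (r_i, r̂_{i+1} − 1)`. -/
def hatMins (L : List ℤ) : List ℤ :=
  (L.foldl (fun (acc : List ℤ × Option ℤ) r =>
    let v := match acc.2 with
      | none => r
      | some p => min r (p - 1)
    (acc.1 ++ [v], some v)) ([], none)).1

/-- Build the weak composition with value `lens_i` in position `hs_i` and `0`
elsewhere. -/
def buildWeakComp (hs : List ℤ) (lens : List ℕ) : List ℕ :=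
  (List.range (hs.headD 0).toNat).map (fun p =>
    match (hs.zip lens).find? (fun q => decide (q.1 = (p : ℤ) + 1)) with
    | some q => q.2
    | none => 0)

/-- The weak descent composition determined by the minima and lengths of the runs
(topmost run first); `none` means virtual. -/
def desFromBlocks (mins : List ℤ) (lens : List ℕ) : Option (List ℕ) :=
  let hs := hatMins mins
  if hs = [] then some []
  else if hs.getLastD 0 ≤ 0 then none
  else some (buildWeakComp hs lens)

/-- The weak descent composition `des(ρ)` of a word; `none` means `ρ` is virtual. -/
def desWord (ρ : List ℕ) : Option (List ℕ) :=
  desFromBlocks ((runs ρ).map (fun r => ((r.headD 0 : ℕ) : ℤ)))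
    ((runs ρ).map List.length)

/-- Prefix-sum dominance of weak compositions: `domLe a b` means
`a_1 + ⋯ + a_k ≤ b_1 + ⋯ + b_k` for all `k` (i.e. `b ≥ a`). -/
def domLe (a b : List ℕ) : Prop := ∀ k, ((a.take k).sum ≤ (b.take k).sum)

/-- A reduced word is Yamanouchi if it is non-virtual and its weak descent
composition is dominated by that of every non-virtual Coxeter–Knuth equivalent word. -/
def IsYam (ρ : List ℕ) : Prop :=
  IsReducedWord ρ ∧ ∃ d, desWord ρ = some d ∧
    ∀ σ e, CKEquiv ρ σ → desWord σ = some e → domLe d e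

/-! ## Quasisymmetric functions, slide polynomials, and generating functions.

We model formal power series in variables `x_1, x_2, …` (indexed by `ℕ`, with
variable `i` standing for `x_{i+1}`) as functions `(ℕ →₀ ℕ) → ℤ` recording
coefficients of monomials. -/

/-- `β` refines `α`: `β` splits into consecutive blocks with sums the parts of `α`. -/
def Refines (β α : List ℕ) : Prop :=
  ∃ blocks : List (List ℕ), blocks.flatten = β ∧
    List.Forall₂ (fun blk a => blk.sum = a) blocks α

/-- The flattening of a weak composition given as a finitely supported exponent
vector: the list of its nonzero values, in order. -/
def flatOf (b : ℕ →₀ ℕ) : List ℕ :=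
  ((List.range (b.support.sup id + 1)).map b).filter (fun x => decide (x ≠ 0))

open Classical in
/-- The fundamental quasisymmetric function `F_α`. -/
noncomputable def Fqs (α : List ℕ) : (ℕ →₀ ℕ) → ℤ :=
  fun b => if Refines (flatOf b) α then 1 else 0

open Classical in
/-- The fundamental slide polynomial `𝔉_a` of a weak composition `a`. -/
noncomputable def FSlide (a : List ℕ) : (ℕ →₀ ℕ) → ℤ :=
  fun b =>
    if (∀ i, a.length ≤ i → b i = 0) ∧
       (∀ k, (a.take k).sum ≤ ∑ i ∈ Finset.range k, b i) ∧
       Refines (flatOf b) (a.filter (fun x => decide (x ≠ 0))) then 1 else 0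

/-- `𝔉` extended to virtual indices by `𝔉_∅ = 0`. -/
noncomputable def FSlideO : Option (List ℕ) → (ℕ →₀ ℕ) → ℤ
  | none => 0
  | some a => FSlide a

/-- The Stanley symmetric function `S_w`. -/
noncomputable def StanleySym (w : Equiv.Perm ℕ) : (ℕ →₀ ℕ) → ℤ :=
  ∑ᶠ ρ ∈ {ρ : List ℕ | ReducedWordFor ρ w}, Fqs (DesComp ρ)

/-- The Schubert polynomial `𝔖_w`. -/
noncomputable def Schubert (w : Equiv.Perm ℕ) : (ℕ →₀ ℕ) → ℤ :=
  ∑ᶠ ρ ∈ {ρ : List ℕ | ReducedWordFor ρ w}, FSlideO (desWord ρ)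

/-! ## Standard Young tableaux and Schur functions. -/

/-- The (bottom-to-top) row index of the row of `T` containing the entry `e`. -/
def rowOf (T : List (List ℕ)) (e : ℕ) : ℕ := T.findIdx (fun r => r.contains e)

/-- The column index of the entry `e` in `T`. -/
def colOf (T : List (List ℕ)) (e : ℕ) : ℕ :=
  (T.getD (rowOf T e) []).findIdx (fun z => z == e)

/-- `T` (rows listed bottom to top) is a standard Young tableau. -/
def IsSYT (T : List (List ℕ)) : Prop :=
  (∀ r ∈ T, r.Chain' (· < ·)) ∧
    T.Chain' (fun lo hi => hi.length ≤ lo.length ∧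
      ∀ j < hi.length, lo.getD j 0 < hi.getD j 0) ∧
    [] ∉ T ∧
    T.flatten.Perm (List.range' 1 T.flatten.length)

/-- The descent composition of a standard Young tableau: `i` is a descent when
`i+1` lies weakly left of `i`. -/
def sytDes (T : List (List ℕ)) : List ℕ :=
  (splitWhen (fun a _ => decide (colOf T (a + 1) ≤ colOf T a))
    (List.range' 1 T.flatten.length)).map List.length

/-- The Schur function `s_λ`, for a partition `λ` given as the list of row lengths
bottom to top. -/
noncomputable def Schur (lam : List ℕ) : (ℕ →₀ ℕ) → ℤ :=
  ∑ᶠ T ∈ {T : List (List ℕ) | IsSYT T ∧ T.map List.length = lam}, Fqs (sytDes T)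

/-! ## Standard key tableaux and Demazure characters. -/

/-- `T` is a standard key tableau of shape the weak composition `a`: rows (listed
bottom to top, with row `i` of length `a_i`, possibly `0`) strictly decrease left to
right, the entries are `1, …, |a|`, and whenever an entry `i` lies above an entry
`k` in the same column with `i < k`, some entry `j` right of `k` satisfies `i < j`. -/
def IsSKT (a : List ℕ) (T : List (List ℕ)) : Prop :=
  T.map List.length = a ∧
    (∀ r ∈ T, r.Chain' (· > ·)) ∧
    T.flatten.Perm (List.range' 1 a.sum) ∧
    ∀ lo hi, lo < hi → hi < T.length →
      ∀ c, c < (T.getD hi []).length → c < (T.getD lo []).length →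
        (T.getD hi []).getD c 0 < (T.getD lo []).getD c 0 →
        ∃ c', c < c' ∧ c' < (T.getD lo []).length ∧
          (T.getD hi []).getD c 0 < (T.getD lo []).getD c' 0

/-- The runs of the word `n ⋯ 2 1` determined by the descents of a standard key
tableau `T` (where `i` is a descent when `i+1` lies weakly right of `i`). -/
def sktRuns (T : List (List ℕ)) : List (List ℕ) :=
  splitWhen (fun _ b => decide (colOf T b ≤ colOf T (b + 1)))
    ((List.range' 1 T.flatten.length).reverse)

/-- The minimal row (1-indexed from the bottom) among the cells of the entries of
`r` in `T`. -/
def minRow (T : List (List ℕ)) (r : List ℕ) : ℕ :=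
  ((r.map (fun e => rowOf T e + 1)).min?).getD 0

/-- The weak descent composition `des(T)` of a standard key tableau; `none` means
`T` is virtual. -/
def desSKT (T : List (List ℕ)) : Option (List ℕ) :=
  (desFromBlocks ((sktRuns T).map (fun r => ((minRow T r : ℕ) : ℤ)))
    ((sktRuns T).map List.length)).map
      (fun d => d ++ List.replicate (T.length - d.length) 0)

/-- The Demazure character (key polynomial) `κ_a`. -/
noncomputable def KeyPoly (a : List ℕ) : (ℕ →₀ ℕ) → ℤ :=
  ∑ᶠ T ∈ {T : List (List ℕ) | IsSKT a T}, FSlideO (desSKT T)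

/-- `κ` extended to virtual indices by `κ_∅ = 0`. -/
noncomputable def KeyPolyO : Option (List ℕ) → (ℕ →₀ ℕ) → ℤ
  | none => 0
  | some a => KeyPoly a

/-! ## Edelman–Greene insertion and weak insertion. -/

/-- Edelman–Greene insertion of `x` into a single row: either append `x`, or bump
the smallest entry exceeding `x` (suppressing the replacement when that entry is
`x+1` and `x` already occurs in the row). -/
def eginsRow (x : ℕ) (row : List ℕ) : List ℕ × Option ℕ :=
  match row.findIdx? (fun z => decide (x < z)) with
  | none => (row ++ [x], none)
  | some j =>
    let y := row.getD j 0
    (if y = x + 1 ∧ row.contains x then row else row.set j x, some y)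

/-- Edelman–Greene insertion of `x` into a tableau (rows bottom to top). -/
def egins : ℕ → List (List ℕ) → List (List ℕ)
  | x, [] => [[x]]
  | x, row :: rest =>
    match eginsRow x row with
    | (r, none) => r :: rest
    | (r, some y) => r :: egins y rest

/-- The Edelman–Greene insertion tableau `P(ρ)` of a word. -/
def PEG (ρ : List ℕ) : List (List ℕ) := ρ.foldl (fun P x => egins x P) []

/-- One sweep of all the maps `drop_i` on a tableau (rows bottom to top). -/
def sweepDropT (T : List (List ℕ)) : List (List ℕ) :=
  (List.range T.length).foldl (fun t i => dropAt (i + 1) t) T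

/-- The drop of a tableau: repeatedly drop until reaching the increasing Young
tableau of the class. -/
def dropCanon (T : List (List ℕ)) : List (List ℕ) :=
  sweepDropT^[T.flatten.length * T.length + 1] T

/-- Weak insertion of the letter `x` into a Yamanouchi key tableau `P`:
`lift (drop P ← x)`. -/
def winsert (x : ℕ) (P : List (List ℕ)) : List (List ℕ) :=
  liftCanon (egins x (dropCanon P))

/-- The weak insertion tableau `P̃(ρ)` (rows bottom to top). -/
def Pweak (ρ : List ℕ) : List (List ℕ) := ρ.foldl (fun P x => winsert x P) []

/-- The Yamanouchi word of the Coxeter–Knuth class of `ρ`: the row reading word of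
`P̃(ρ)`. -/
def yamWord (ρ : List ℕ) : List ℕ := wordOf (Pweak ρ)

/-- The shape (weak composition) of the weak insertion tableau of the first `m`
letters of `ρ`. -/
def shapeAt (ρ : List ℕ) (m : ℕ) : List ℕ :=
  (desWord (wordOf (Pweak (ρ.take m)))).getD []

/-- Append the entry `e` at the end of row `j` (0-indexed from the bottom),
extending with empty rows as needed. -/
def placeEntry (Q : List (List ℕ)) (j e : ℕ) : List (List ℕ) :=
  let Q' := Q ++ List.replicate (j + 1 - Q.length) []
  Q'.set j (Q'.getD j [] ++ [e])

/-- The (0-indexed) row in which the shape grows from `aold` to `anew`. -/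
def growRow (aold anew : List ℕ) : ℕ :=
  ((List.range anew.length).find?
    (fun j => decide (aold.getD j 0 ≠ anew.getD j 0))).getD 0

/-- The weak recording tableau `Q̃(ρ)`: entry `i` is placed in the cell where the
shape grows at the step inserting `ρ_i` (entries are placed in decreasing order). -/
def Qweak (ρ : List ℕ) : List (List ℕ) :=
  (List.range ρ.length).foldl (fun Q m =>
    placeEntry Q (growRow (shapeAt ρ m) (shapeAt ρ (m + 1))) (ρ.length - m)) []

/-! ## Elementary weak dual equivalence involutions. -/

/-- Column reading order on entries: by column, and bottom to top within a column. -/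
def colKeyLe (T : List (List ℕ)) (x y : ℕ) : Bool :=
  decide (colOf T x < colOf T y ∨ (colOf T x = colOf T y ∧ rowOf T x ≤ rowOf T y))

/-- Sort three values by a boolean order. -/
def sort3 (le : ℕ → ℕ → Bool) (a b c : ℕ) : ℕ × ℕ × ℕ :=
  if le a b then
    if le b c then (a, b, c) else if le a c then (a, c, b) else (c, a, b)
  else
    if le a c then (b, a, c) else if le b c then (b, c, a) else (c, b, a)

/-- Relabel the entries `x, y, z` of `T` as `x', y', z'` respectively. -/
def relabel3 (T : List (List ℕ)) (x y z x' y' z' : ℕ) : List (List ℕ) :=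
  T.map (List.map (fun t =>
    if t = x then x' else if t = y then y' else if t = z then z' else t))

/-- The elementary weak dual equivalence involution `d̃_i` on standard key tableaux:
with `u, v, w` the cells of `i−1, i, i+1` in column reading order, if `u` and `w`
share a row and `v` does not, cycle the three entries so that `i` shares a row with
`i ± 1`; else if `v` holds `i+1` swap `i−1, i`; else if `v` holds `i−1` swap
`i, i+1`; otherwise fix `T`. -/
def wde (i : ℕ) (T : List (List ℕ)) : List (List ℕ) :=
  let s := sort3 (colKeyLe T) (i - 1) i (i + 1)
  let u := s.1
  let v := s.2.1
  let w := s.2.2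
  if rowOf T u = rowOf T w ∧ rowOf T v ≠ rowOf T u then
    let T1 := relabel3 T u v w w u v
    let T2 := relabel3 T u v w v w u
    if rowOf T1 i = rowOf T1 (i - 1) ∨ rowOf T1 i = rowOf T1 (i + 1) then T1 else T2
  else if v = i + 1 then relabel3 T (i - 1) i (i + 1) i (i - 1) (i + 1)
  else if v = i - 1 then relabel3 T (i - 1) i (i + 1) (i - 1) (i + 1) i
  else T

/-- Remove trailing zero parts of a weak composition (two weak compositions are
identified when they differ only in trailing zeros). -/
def trimZeros (a : List ℕ) : List ℕ :=
  (a.reverse.dropWhile (fun x => x == 0)).reverse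

/-- The transposition `s_i` acting on compositions by interchanging the parts in
positions `i` and `i+1` (1-indexed). -/
def swapParts (i : ℕ) (c : List ℕ) : List ℕ :=
  if 1 ≤ i ∧ i < c.length then
    (c.set (i - 1) (c.getD i 0)).set i (c.getD (i - 1) 0)
  else c

end EG

namespace EG

theorem slide_move (pre : List ℕ) (a x b : ℕ) (rest : List ℕ) (hx : x < a) (hb : a < b) :
    ckMove (rest.length + 2) (pre ++ a :: x :: b :: rest) = pre ++ a :: b :: x :: rest := by
  have hp : (pre ++ a :: x :: b :: rest).length - (rest.length + 2) - 1 = pre.length := by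
    simp only [List.length_append, List.length_cons]; omega
  have hc : 2 ≤ rest.length + 2 ∧
      rest.length + 2 + 1 ≤ (pre ++ a :: x :: b :: rest).length := by
    simp only [List.length_append, List.length_cons]; omega
  have ht : ckTriple a x b = (a, b, x) := by
    unfold ckTriple
    rw [if_neg (by omega), if_pos (by omega)]
  unfold ckMove
  rw [if_pos hc, hp]
  have h0 : (pre ++ a :: x :: b :: rest).getD pre.length 0 = a := by
    simp [List.getD_eq_getElem?_getD]
  have h1 : (pre ++ a :: x :: b :: rest).getD (pre.length + 1) 0 = x := by
    simp [List.getD_eq_getElem?_getD, List.getElem?_append_right]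
  have h2 : (pre ++ a :: x :: b :: rest).getD (pre.length + 2) 0 = b := by
    simp [List.getD_eq_getElem?_getD, List.getElem?_append_right]
  simp only [h0, h1, h2, ht]
  simp [List.set_append_right]

theorem slide_aux (x : ℕ) : ∀ (rest pre : List ℕ) (a : ℕ),
    (a :: rest).IsChain (· < ·) → x < a →
    CKEquiv (pre ++ a :: x :: rest) (pre ++ ((a :: rest) ++ [x]))
  | [], pre, a, _, _ => ⟨[], by simp⟩
  | b :: rest, pre, a, h, hx => by
    rw [List.isChain_cons_cons] at h
    obtain ⟨ms, hms⟩ := slide_aux x rest (pre ++ [a]) b h.2 (hx.trans h.1)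
    refine ⟨(rest.length + 2) :: ms, ?_⟩
    rw [List.foldl_cons, slide_move pre a x b rest hx h.1]
    simpa using hms

/-- Let `σ_ℓ σ_{ℓ−1} ⋯ σ_1` be a strictly increasing word (read
left to right) and let `x` be a letter with `x < σ_ℓ`, such that
`σ_ℓ x σ_{ℓ−1} ⋯ σ_1` is a reduced word.  Then `σ_ℓ x σ_{ℓ−1} ⋯ σ_1` is
Coxeter–Knuth equivalent to `σ_ℓ σ_{ℓ−1} ⋯ σ_1 x`. -/
theorem slide_lemma (a : ℕ) (rest : List ℕ) (x : ℕ)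
    (hinc : (a :: rest).Chain' (· < ·)) (hx : x < a)
    (hred : IsReducedWord (a :: x :: rest)) :
    CKEquiv (a :: x :: rest) ((a :: rest) ++ [x]) := by
  exact slide_aux x rest [] a hinc hx

end EG
end

section
/- For ρ a reduced word with run decomposition (ρ⁽ᵏ⁾ | ⋯ | ρ⁽¹⁾), the descent tableau 𝔻(ρ) is an increasing Young tableau if and only if drop_i(ρ) = ρ for all 1 ≤ i < k. -/
open List

namespace EG

theorem aux_split (brk : ℕ → ℕ → Bool) : ∀ (rest : List ℕ) (a : ℕ),
    ∃ r rs, splitWhen brk (a :: rest) = (a :: r) :: rs ∧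
      ((a :: r) :: rs).flatten = a :: rest ∧
      (∀ t ∈ (a :: r) :: rs, t ≠ [] ∧ t.IsChain (fun x y => brk x y = false)) ∧
      ((a :: r) :: rs).IsChain (fun s t => ∀ x ∈ s.getLast?, ∀ y ∈ t.head?, brk x y = true) := by
  intro rest
  induction rest with
  | nil => intro a; exact ⟨[], [], by simp [splitWhen], by simp, by simp, by simp⟩
  | cons b rest ih =>
    intro a
    obtain ⟨r, rs, h1, h2, h3, h4⟩ := ih b
    by_cases hb : brk a b = true
    · refine ⟨[], (b :: r) :: rs, ?_, ?_, ?_, ?_⟩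
      · simp [splitWhen, h1, hb]
      · rw [List.flatten_cons, h2]; rfl
      · intro t ht
        rcases List.mem_cons.1 ht with rfl | ht
        · simp
        · exact h3 t ht
      · refine List.IsChain.cons_cons ?_ h4
        simp [hb]
    · refine ⟨b :: r, rs, ?_, ?_, ?_, ?_⟩
      · simp [splitWhen, h1, hb]
      · rw [← h2]; rfl
      · intro t ht
        rcases List.mem_cons.1 ht with rfl | ht
        · refine ⟨by simp, List.IsChain.cons_cons (by simpa using hb) (h3 (b :: r) (by simp)).2⟩
        · exact h3 t (List.mem_cons_of_mem _ ht)
      · cases rs with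
        | nil => simp
        | cons t rs =>
          rw [List.isChain_cons_cons] at h4 ⊢
          refine ⟨?_, h4.2⟩
          have : (a :: b :: r).getLast? = (b :: r).getLast? := by simp [List.getLast?_cons]
          rw [this]; exact h4.1

theorem aux_runs (ρ : List ℕ) :
    (runs ρ).flatten = ρ ∧
      (∀ t ∈ runs ρ, t ≠ [] ∧ t.IsChain (· < ·)) ∧
      (runs ρ).IsChain (fun s t => ∀ x ∈ s.getLast?, ∀ y ∈ t.head?, y ≤ x) := by
  cases ρ with
  | nil => simp [runs, splitWhen]
  | cons a rest =>
    obtain ⟨r, rs, h1, h2, h3, h4⟩ := aux_split (fun a b => decide (b ≤ a)) rest a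
    unfold runs
    rw [h1]
    refine ⟨h2, ?_, ?_⟩
    · simpa using h3
    · simpa using h4

theorem aux_noadj (ρ : List ℕ) (h : IsReducedWord ρ) (p q : List ℕ) (a : ℕ)
    (e : ρ = p ++ a :: a :: q) : False := by
  subst e
  have := h.2 (p ++ q) (fun i hi => h.1 i (by
    simp only [List.mem_append, List.mem_cons] at hi ⊢; tauto)) (by
    simp [toPerm])
  simp at this

theorem aux_fail_some {τ σ : List ℕ} {j : ℕ} (h : failIdx τ σ = some j) :
    j < τ.length ∧ j < σ.length ∧ τ.getD j 0 ≤ σ.getD j 0 ∧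
      ∀ i < j, σ.getD i 0 < τ.getD i 0 := by
  unfold failIdx at h
  rw [List.findIdx?_eq_some_iff_getElem] at h
  obtain ⟨hj, h1, h2⟩ := h
  simp at hj h1 h2
  refine ⟨hj.1, hj.2, by simpa [hj.1, hj.2] using h1, fun i hi => ?_⟩
  have := h2 i hi
  simpa [hi.trans hj.1, hi.trans hj.2] using this

theorem aux_fail_none {τ σ : List ℕ} : failIdx τ σ = none ↔
    ∀ i, i < τ.length → i < σ.length → σ.getD i 0 < τ.getD i 0 := by
  unfold failIdx
  rw [List.findIdx?_eq_none_iff]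
  constructor
  · intro h i h1 h2
    have := h (τ[i], σ[i]) (by
      rw [List.mem_iff_getElem]; exact ⟨i, by simp [h1, h2], by simp⟩)
    simpa [h1, h2] using this
  · intro h p hp
    obtain ⟨i, hi, rfl⟩ := List.mem_iff_getElem.1 hp
    simp at hi
    have := h i hi.1 hi.2
    simpa [hi.1, hi.2] using this

theorem aux_sub : ∀ (n : ℕ) (τ σ : List ℕ), ∀ x ∈ (dropPairAux n τ σ).1, x ∈ τ := by
  intro n
  induction n with
  | zero => intro τ σ x hx; exact hx
  | succ n ih =>
    intro τ σ x hx
    rw [dropPairAux] at hx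
    split at hx
    · split at hx
      · exact List.mem_of_mem_take hx
      · exact hx
    · simp only [List.mem_append] at hx
      rcases hx with hx | hx
      · exact List.mem_of_mem_take hx
      · exact List.mem_of_mem_drop (ih _ _ x hx)

theorem aux_ne : ∀ (n : ℕ) (τ σ : List ℕ) (s y : ℕ), s ∈ σ.head? → y ∈ τ.getLast? → s < y →
    (dropPairAux n τ σ).1 ≠ [] := by
  intro n
  induction n with
  | zero => intro τ σ s y hs hy h; rw [dropPairAux]; rintro rfl; simp at hy
  | succ n ih =>
    intro τ σ s y hs hy h
    have hτ : τ ≠ [] := by rintro rfl; simp at hy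
    have hσ : σ ≠ [] := by rintro rfl; simp at hs
    rw [dropPairAux]
    split
    · split
      · simp [hτ, hσ]
      · exact hτ
    · rename_i j hj
      obtain ⟨h1, h2, h3, h4⟩ := aux_fail_some hj
      rcases Nat.eq_zero_or_pos j with rfl | hj0
      · obtain ⟨t, τ', rfl⟩ := List.exists_cons_of_ne_nil hτ
        obtain ⟨s', σ', rfl⟩ := List.exists_cons_of_ne_nil hσ
        simp at hs h3
        subst hs
        cases τ' with
        | nil => simp at hy; omega
        | cons t' τ' =>
          have := ih (t' :: τ') (s' :: σ') s' y (by simp)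
            (by simpa [List.getLast?_cons] using hy) h
          simpa using this
      · simp [hτ]; intro h; omega

theorem aux_pair (τ σ : List ℕ) (hτ : τ.IsChain (· < ·)) (s y : ℕ)
    (hs : s ∈ σ.head?) (hy : y ∈ τ.getLast?) (h : s < y)
    (e : (dropPair τ σ).1 ++ (dropPair τ σ).2 = τ ++ σ) :
    τ.length ≤ σ.length ∧ ∀ j < τ.length, σ.getD j 0 < τ.getD j 0 := by
  have hτ0 : τ ≠ [] := by rintro rfl; simp at hy
  have hσ0 : σ ≠ [] := by rintro rfl; simp at hs
  have hp : τ.Pairwise (· < ·) := List.isChain_iff_pairwise.1 hτ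
  have key : ∀ i (hi : i < τ.length), τ[0]'(by omega) ≤ τ[i] := by
    intro i hi
    rcases Nat.eq_zero_or_pos i with rfl | h0
    · rfl
    · exact (List.pairwise_iff_getElem.1 hp 0 i _ _ h0).le
  have hs0 : σ[0]'(List.length_pos_iff.2 hσ0) = s := by
    cases σ with
    | nil => simp at hs
    | cons a l => simpa using hs
  have hσl := List.length_pos_iff.2 hσ0
  have hτl := List.length_pos_iff.2 hτ0
  unfold dropPair at e
  rw [dropPairAux] at e
  split at e
  · rename_i hf
    rw [aux_fail_none] at hf
    by_cases hl : σ.length < τ.length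
    · exfalso
      simp only [hl, if_true] at e
      have e2 : σ ++ τ.drop σ.length = τ.drop σ.length ++ σ := by
        apply List.append_cancel_left (as := τ.take σ.length)
        rw [e, ← List.append_assoc, List.take_append_drop]
      have := congrArg (fun l => l[0]?) e2
      have h0 := hf 0 hτl hσl
      have h1 := key _ hl
      simp [List.getElem?_append, hσl, hl, hτl] at this h0
      omega
    · refine ⟨by omega, fun j hj => hf j hj (by omega)⟩
  · exfalso
    rename_i j hj
    obtain ⟨h1, h2, h3, h4⟩ := aux_fail_some hj
    dsimp only at e
    generalize hb : (if _ = 0 then 0 else _) = b at e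
    have hx : τ.getD j 0 = τ[j] := by simp [h1]
    have e2 : (dropPairAux τ.length (τ.drop (j+1)) (σ.drop j)).1 ++ (σ.take j ++ τ.getD j 0 ::
        incFirst b (dropPairAux τ.length (τ.drop (j+1)) (σ.drop j)).2)
        = τ.getD j 0 :: τ.drop (j+1) ++ σ := by
      apply List.append_cancel_left (as := τ.take j)
      rw [← List.append_assoc, e, hx, ← List.append_assoc, List.getElem_cons_drop, List.take_append_drop]
    cases hr : (dropPairAux τ.length (τ.drop (j+1)) (σ.drop j)).1 with
    | cons z zs =>
      have hz := aux_sub τ.length (τ.drop (j+1)) (σ.drop j) z (by rw [hr]; simp)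
      rw [hr] at e2
      simp only [List.cons_append, List.cons.injEq] at e2
      obtain ⟨i, hi, hi2⟩ := List.mem_iff_getElem.1 hz
      simp at hi hi2
      have := List.pairwise_iff_getElem.1 hp j (j+1+i) h1 (by omega) (by omega)
      have := e2.1
      omega
    | nil =>
      rw [hr] at e2
      rcases Nat.eq_zero_or_pos j with rfl | hj0
      · obtain ⟨t, τ', rfl⟩ := List.exists_cons_of_ne_nil hτ0
        simp at h3 hs0
        cases τ' with
        | nil => 
          simp at hy
          simp [List.getElem?_eq_getElem hσl] at h3
          omega
        | cons t' τ' =>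
          exact aux_ne _ _ _ s y (by simpa using hs)
            (by simpa [List.getLast?_cons] using hy) h hr
      · have := congrArg (fun l => l[0]?) e2
        have h0 := h4 0 hj0
        have h5 := key j h1
        simp [List.getElem?_append, hσl, hτl, hj0, h1] at this h0
        omega

theorem aux_pair_fix (τ σ : List ℕ)
    (h : τ.length ≤ σ.length ∧ ∀ j < τ.length, σ.getD j 0 < τ.getD j 0) :
    dropPair τ σ = (τ, σ) := by
  have : failIdx τ σ = none := aux_fail_none.2 (fun i hi _ => h.2 i hi)
  unfold dropPair
  rw [dropPairAux, this]
  simp [h.1]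

theorem aux_dropAt (B : List (List ℕ)) (σ τ : List ℕ) : ∀ A : List (List ℕ),
    dropAt (A.length + 1) (A ++ σ :: τ :: B) =
      A ++ (dropPair τ σ).2 :: (dropPair τ σ).1 :: B := by
  intro A
  induction A with
  | nil => simp [dropAt]
  | cons a A ih => 
    simp only [List.length_cons, List.cons_append]
    rw [dropAt, ih]

theorem increasing_iff_drop_fixed (ρ : List ℕ) (h : IsReducedWord ρ) :
    IsIncreasingYoungRows (rowsOf ρ) ↔
      ∀ i, 1 ≤ i → i + 1 ≤ (runs ρ).length → dropWordAt i ρ = ρ := by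
  obtain ⟨hf, hr, hc⟩ := aux_runs ρ
  have hw : wordOf (rowsOf ρ) = ρ := by simp [wordOf, rowsOf, hf]
  have hlen : (rowsOf ρ).length = (runs ρ).length := by simp [rowsOf]
  have hsplit : ∀ i (hi : i + 1 < (rowsOf ρ).length),
      rowsOf ρ = (rowsOf ρ).take i ++ (rowsOf ρ)[i] :: (rowsOf ρ)[i+1] :: (rowsOf ρ).drop (i+2) := by
    intro i hi
    simp
  constructor
  · rintro ⟨-, h2⟩ i hi1 hi2
    obtain ⟨i, rfl⟩ : ∃ k, i = k + 1 := ⟨i - 1, by omega⟩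
    have hi : i + 1 < (rowsOf ρ).length := by omega
    have hp := List.isChain_iff_getElem.1 h2 i hi
    have := aux_dropAt ((rowsOf ρ).drop (i+2)) (rowsOf ρ)[i] (rowsOf ρ)[i+1] ((rowsOf ρ).take i)
    rw [aux_pair_fix _ _ hp, ← hsplit i hi, List.length_take, min_eq_left (by omega)] at this
    rw [dropWordAt, this, hw]
  · intro H
    refine ⟨fun r hr' => (hr r (by simpa [rowsOf] using hr')).2, ?_⟩
    refine List.isChain_iff_getElem.2 fun i hi => ?_
    have H1 := H (i+1) (by omega) (by omega)
    have := aux_dropAt ((rowsOf ρ).drop (i+2)) (rowsOf ρ)[i] (rowsOf ρ)[i+1] ((rowsOf ρ).take i)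
    rw [← hsplit i hi, List.length_take, min_eq_left (by omega)] at this
    have hs := hsplit i hi
    have hm1 : (rowsOf ρ)[i+1] ∈ runs ρ := by
      have := List.getElem_mem hi
      simpa [rowsOf] using this
    have hm0 : (rowsOf ρ)[i] ∈ runs ρ := by
      have := List.getElem_mem (show i < (rowsOf ρ).length by omega)
      simpa [rowsOf] using this
    generalize (rowsOf ρ)[i] = σ at *
    generalize (rowsOf ρ)[i+1] = τ at *
    generalize (rowsOf ρ).take i = A at *
    generalize (rowsOf ρ).drop (i+2) = B at *
    have hw' := hw
    rw [hs] at hw'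
    rw [dropWordAt, this] at H1
    have E := H1.trans hw'.symm
    simp only [wordOf, List.reverse_append, List.reverse_cons, List.flatten_append,
      List.append_assoc, List.flatten_cons, List.flatten_nil, List.append_nil,
      List.append_cancel_left_eq] at E
    rw [← List.append_assoc, ← List.append_assoc] at E
    have E := List.append_cancel_right E
    have hruns : runs ρ = B.reverse ++ τ :: σ :: A.reverse := by
      have := congrArg List.reverse hs
      simpa [rowsOf] using this
    obtain ⟨τ', y, rfl⟩ : ∃ τ' y, τ = τ' ++ [y] := by
      exact ⟨_, _, (List.dropLast_append_getLast (hr τ hm1).1).symm⟩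
    obtain ⟨s, σ', rfl⟩ := List.exists_cons_of_ne_nil (hr σ hm0).1
    have hle : s ≤ y := by
      rw [hruns] at hc
      have := (List.isChain_append.1 hc).2.1
      rw [List.isChain_cons_cons] at this
      exact this.1 y (by simp) s (by simp)
    have hne : s ≠ y := by
      rintro rfl
      refine aux_noadj ρ h (B.reverse.flatten ++ τ') (σ' ++ A.reverse.flatten) s ?_
      rw [← hf, hruns]; simp
    exact aux_pair _ _ (hr _ hm1).2 s y (by simp) (by simp) (by omega) E

end EG
end

section
/- For any permutation w, the Stanley symmetric function satisfies S_w(X) = Σ s_{Des(ρ)}(X), where the sum is over reduced words ρ ∈ R(w) whose descent tableau 𝔻(ρ) is an increasing Young tableau of partition shape (for such ρ, Des(ρ) is a partition). -/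
open List

namespace EG

theorem toPerm_append (a b : List ℕ) : toPerm (a ++ b) = toPerm a * toPerm b := by
  simp [toPerm]

theorem toPerm_cons (a : ℕ) (b : List ℕ) : toPerm (a :: b) = Equiv.swap a (a+1) * toPerm b := by
  simp [toPerm]

theorem toPerm_single (a : ℕ) : toPerm [a] = Equiv.swap a (a+1) := by
  simp [toPerm]

theorem toPerm_nil : toPerm [] = 1 := by
  simp [toPerm]

theorem toPerm_reverse (a : List ℕ) : toPerm a.reverse = (toPerm a)⁻¹ := by
  induction a with
  | nil => simp [toPerm]
  | cons x a ih =>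
    rw [reverse_cons, toPerm_append, ih, toPerm_single, toPerm_cons, mul_inv_rev, Equiv.swap_inv]

theorem swap_comm_far {a b : ℕ} (h : a + 2 ≤ b) :
    Equiv.swap a (a+1) * Equiv.swap b (b+1) = Equiv.swap b (b+1) * Equiv.swap a (a+1) := by
  apply Equiv.Perm.Disjoint.commute
  apply Equiv.Perm.disjoint_swap_swap
  simp; omega

theorem toPerm_comm_gt {x : ℕ} {b : List ℕ} (h : ∀ z ∈ b, x + 2 ≤ z) :
    toPerm b * Equiv.swap x (x+1) = Equiv.swap x (x+1) * toPerm b := by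
  induction b with
  | nil => simp [toPerm]
  | cons z b ih =>
    simp only [mem_cons, forall_eq_or_imp] at h
    rw [toPerm_cons, mul_assoc, ih h.2, ← mul_assoc, ← swap_comm_far h.1, mul_assoc]

theorem toPerm_comm_lt {x : ℕ} {b : List ℕ} (h : ∀ z ∈ b, z + 2 ≤ x) :
    toPerm b * Equiv.swap x (x+1) = Equiv.swap x (x+1) * toPerm b := by
  induction b with
  | nil => simp [toPerm]
  | cons z b ih =>
    simp only [mem_cons, forall_eq_or_imp] at h
    rw [toPerm_cons, mul_assoc, ih h.2, ← mul_assoc, swap_comm_far h.1, mul_assoc]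

theorem braid (x : ℕ) : Equiv.swap x (x+1) * (Equiv.swap (x+1) (x+2) * Equiv.swap x (x+1)) =
    Equiv.swap (x+1) (x+2) * (Equiv.swap x (x+1) * Equiv.swap (x+1) (x+2)) := by
  ext z
  simp only [Equiv.Perm.mul_apply, Equiv.swap_apply_def]
  grind

theorem red_of_eq {a b : List ℕ} (h : IsReducedWord a) (hp : ∀ i ∈ b, 1 ≤ i)
    (he : toPerm b = toPerm a) (hl : b.length = a.length) : IsReducedWord b :=
  ⟨hp, fun σ h1 h2 => hl ▸ h.2 σ h1 (h2.trans he)⟩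

theorem red_infix {a b c : List ℕ} (h : IsReducedWord (a ++ b ++ c)) : IsReducedWord b := by
  refine ⟨fun i hi => h.1 i (by simp [hi]), fun σ h1 h2 => ?_⟩
  have := h.2 (a ++ σ ++ c) (by
    intro i hi
    simp only [mem_append] at hi
    rcases hi with (hi | hi) | hi
    · exact h.1 i (by simp [hi])
    · exact h1 i hi
    · exact h.1 i (by simp [hi])) (by simp [toPerm_append, h2])
  simp at this
  omega

theorem red_left {a b : List ℕ} (h : IsReducedWord (a ++ b)) : IsReducedWord a :=
  red_infix (a := []) (c := b) (by simpa using h)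

theorem red_right {a b : List ℕ} (h : IsReducedWord (a ++ b)) : IsReducedWord b :=
  red_infix (a := a) (c := []) (by simpa using h)

theorem red_tail {a : ℕ} {b : List ℕ} (h : IsReducedWord (a :: b)) : IsReducedWord b :=
  red_right (a := [a]) (by simpa using h)

theorem red_reverse {a : List ℕ} (h : IsReducedWord a) : IsReducedWord a.reverse := by
  refine ⟨fun i hi => h.1 i (by simpa using hi), fun σ h1 h2 => ?_⟩
  have := h.2 σ.reverse (by simpa using h1) (by rw [toPerm_reverse, h2, toPerm_reverse, inv_inv])
  simpa using this

/-- exchange -/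
theorem exch (ρ : List ℕ) (i : ℕ) (h : toPerm ρ (i+1) < toPerm ρ i) :
    ∃ σ : List ℕ, (∀ j ∈ σ, j ∈ ρ) ∧ σ.length + 1 = ρ.length ∧
      toPerm σ = toPerm ρ * Equiv.swap i (i+1) := by
  induction ρ with
  | nil => simp [toPerm] at h
  | cons a ρ ih =>
    by_cases h' : toPerm ρ (i+1) < toPerm ρ i
    · obtain ⟨σ, h1, h2, h3⟩ := ih h'
      refine ⟨a :: σ, ?_, by simp [h2], by rw [toPerm_cons, h3, toPerm_cons, mul_assoc]⟩
      intro j hj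
      simp only [mem_cons] at hj ⊢
      rcases hj with hj | hj
      · exact Or.inl hj
      · exact Or.inr (h1 j hj)
    · have hne : toPerm ρ (i+1) ≠ toPerm ρ i := by
        intro he
        have := (toPerm ρ).injective he
        omega
      refine ⟨ρ, by simp +contextual, by simp, ?_⟩
      rw [toPerm_cons] at h ⊢
      simp only [Equiv.Perm.mul_apply] at h
      have key : toPerm ρ i = a ∧ toPerm ρ (i+1) = a + 1 := by
        simp only [Equiv.swap_apply_def] at h
        split_ifs at h <;> omega
      have : Equiv.swap a (a+1) * toPerm ρ = toPerm ρ * Equiv.swap i (i+1) := by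
        rw [← key.2]
        nth_rewrite 1 [← key.1]
        rw [Equiv.swap_apply_apply]
        simp
      rw [this, mul_assoc, Equiv.swap_mul_self, mul_one]

theorem red_desc {ρ : List ℕ} {i : ℕ} (h : IsReducedWord (ρ ++ [i])) :
    toPerm ρ i < toPerm ρ (i+1) := by
  by_contra hc
  have hne : toPerm ρ (i+1) ≠ toPerm ρ i := by
    intro he
    have := (toPerm ρ).injective he
    omega
  obtain ⟨σ, h1, h2, h3⟩ := exch ρ i (by omega)
  have := h.2 σ (fun j hj => h.1 j (by simp [h1 j hj])) (by rw [h3, toPerm_append, toPerm_single])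
  simp at this
  omega

theorem toPerm_fin (ρ : List ℕ) : ∃ N, ∀ i, N ≤ i → toPerm ρ i = i := by
  induction ρ with
  | nil => exact ⟨0, by simp [toPerm]⟩
  | cons a ρ ih =>
    obtain ⟨N, hN⟩ := ih
    refine ⟨max N (a+2), fun i hi => ?_⟩
    rw [toPerm_cons, Equiv.Perm.mul_apply, hN i (by omega), Equiv.swap_apply_of_ne_of_ne] <;> omega

theorem finite_red (n : ℕ) : ∀ w : Equiv.Perm ℕ,
    {ρ : List ℕ | ReducedWordFor ρ w ∧ ρ.length = n}.Finite := by
  induction n with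
  | zero =>
    intro w
    apply (Set.finite_singleton []).subset
    rintro ρ ⟨_, h⟩
    simpa using h
  | succ n ih =>
    intro w
    by_cases hw : ∃ ρ, toPerm ρ = w
    · obtain ⟨ρ0, h0⟩ := hw
      obtain ⟨N, hN⟩ := toPerm_fin ρ0
      rw [h0] at hN
      have : (⋃ i ∈ Finset.range N, (fun ρ : List ℕ => ρ ++ [i]) ''
          {ρ : List ℕ | ReducedWordFor ρ (w * Equiv.swap i (i+1)) ∧ ρ.length = n}).Finite := by
        apply Set.Finite.biUnion (Finset.finite_toSet _)
        intro i _
        exact (ih _).image _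
      refine this.subset ?_
      rintro ρ ⟨⟨h1, h2⟩, h3⟩
      rcases List.eq_nil_or_concat ρ with rfl | ⟨ρ', i, rfl⟩
      · simp at h3
      · simp only [List.concat_eq_append] at *
        have hd := red_desc h1
        rw [toPerm_append, toPerm_single] at h2
        have h4 : toPerm ρ' = w * Equiv.swap i (i+1) := by
          rw [← h2, mul_assoc, Equiv.swap_mul_self, mul_one]
        simp only [Set.mem_iUnion, Set.mem_image]
        refine ⟨i, ?_, ρ', ⟨⟨red_left h1, h4⟩, by simpa using h3⟩, rfl⟩
        simp only [Finset.mem_range]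
        by_contra hc
        rw [h4] at hd
        simp [hN i (by omega), hN (i+1) (by omega)] at hd
    · apply Set.finite_empty.subset
      rintro ρ ⟨⟨h1, h2⟩, h3⟩
      exact hw ⟨ρ, h2⟩

theorem finite_R (w : Equiv.Perm ℕ) : {ρ : List ℕ | ReducedWordFor ρ w}.Finite := by
  by_cases hw : ∃ ρ, ReducedWordFor ρ w
  · obtain ⟨ρ0, h0⟩ := hw
    apply (finite_red ρ0.length w).subset
    intro ρ h
    refine ⟨h, le_antisymm ?_ ?_⟩
    · exact h.1.2 _ h0.1.1 (h0.2.trans h.2.symm)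
    · exact h0.1.2 _ h.1.1 (h.2.trans h0.2.symm)
  · apply Set.finite_empty.subset
    intro ρ h
    exact hw ⟨ρ, h⟩

/-- strictly increasing -/
abbrev Srt (r : List ℕ) : Prop := r.Pairwise (· < ·)

theorem red_R1 {u r : List ℕ} {x : ℕ} (hs : Srt r) (h : IsReducedWord (u ++ (r ++ [x]))) (hx : x ∈ r) :
    x + 1 ∈ r := by
  by_contra hc
  obtain ⟨a, b, rfl⟩ := List.append_of_mem hx
  have hb : ∀ z ∈ b, x + 2 ≤ z := by
    intro z hz
    have h1 : x < z := by
      rw [Srt, pairwise_append] at hs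
      exact (pairwise_cons.1 hs.2.1).1 z hz
    have h2 : z ≠ x + 1 := by
      rintro rfl
      exact hc (by simp [hz])
    omega
  have h' := red_right h
  have := h'.2 (a ++ b) (fun i hi => h'.1 i (by simp at hi ⊢; tauto)) (by
    simp only [toPerm_append, toPerm_cons, toPerm_nil, mul_assoc, mul_one]
    rw [toPerm_comm_gt hb, ← mul_assoc (Equiv.swap _ _), Equiv.swap_mul_self, one_mul])
  simp at this

theorem red_R2 {u r : List ℕ} {y : ℕ} (hs : Srt r) (h : IsReducedWord (u ++ (y :: r))) (hx : y ∈ r) :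
    ∃ z ∈ r, y = z + 1 := by
  by_contra! hc
  obtain ⟨a, b, rfl⟩ := List.append_of_mem hx
  have hb : ∀ z ∈ a, z + 2 ≤ y := by
    intro z hz
    have h1 : z < y := by
      rw [Srt, pairwise_append] at hs
      exact hs.2.2 z hz y (by simp)
    have h2 := hc z (by simp [hz])
    omega
  have h' := red_right h
  have := h'.2 (a ++ b) (fun i hi => h'.1 i (by simp at hi ⊢; tauto)) (by
    simp only [toPerm_append, toPerm_cons, toPerm_nil, mul_assoc, mul_one]
    rw [← mul_assoc (toPerm a), toPerm_comm_lt hb]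
    simp only [← mul_assoc, Equiv.swap_mul_self, one_mul])
  simp at this

theorem red_ne {x y : ℕ} {u : List ℕ} (h : IsReducedWord (x :: y :: u)) : x ≠ y := by
  rintro rfl
  have := h.2 u (fun i hi => h.1 i (by simp [hi])) (by
    simp only [toPerm_cons, ← mul_assoc, Equiv.swap_mul_self, one_mul])
  simp at this

end EG

namespace EG

def Above : List ℕ → List ℕ → Prop
  | _, [] => True
  | [], _ :: _ => False
  | z :: r, w :: s => z < w ∧ Above r s

@[simp] theorem above_nil (r : List ℕ) : Above r [] := by cases r <;> simp [Above]
@[simp] theorem nil_above (w : ℕ) (s : List ℕ) : ¬ Above [] (w :: s) := by simp [Above]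
@[simp] theorem cons_above (z w : ℕ) (r s : List ℕ) :
    Above (z :: r) (w :: s) ↔ z < w ∧ Above r s := by simp [Above]

inductive Bump (x y : ℕ) : List ℕ → List ℕ → Prop
  | repl (t : List ℕ) : x < y → (∀ z ∈ t, y < z) → Bump x y (y :: t) (x :: t)
  | spec (t : List ℕ) : y = x + 1 → Bump x y (x :: y :: t) (x :: y :: t)
  | cons (z : ℕ) (r r' : List ℕ) : z < x → Bump x y r r' → Bump x y (z :: r) (z :: r')

theorem Bump.lt {x y : ℕ} {r r' : List ℕ} (h : Bump x y r r') : x < y := by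
  induction h <;> omega

theorem Bump.mem_left {x y : ℕ} {r r' : List ℕ} (h : Bump x y r r') : y ∈ r := by
  induction h <;> simp_all

theorem Bump.mem_right {x y : ℕ} {r r' : List ℕ} (h : Bump x y r r') : x ∈ r' := by
  induction h <;> simp_all

theorem Bump.sub {x y : ℕ} {r r' : List ℕ} (h : Bump x y r r') : ∀ z ∈ r', z ∈ r ∨ z = x := by
  induction h <;> grind

theorem Bump.sup {x y : ℕ} {r r' : List ℕ} (h : Bump x y r r') : ∀ z ∈ r, z ∈ r' ∨ z = y := by
  induction h <;> grind

theorem Bump.length {x y : ℕ} {r r' : List ℕ} (h : Bump x y r r') : r'.length = r.length := by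
  induction h <;> simp_all

theorem Bump.srt {x y : ℕ} {r r' : List ℕ} (h : Bump x y r r') (hs : Srt r) : Srt r' := by
  induction h with
  | repl t h1 h2 => simp_all; intro a ha; have := h2 a ha; omega
  | spec t h => exact hs
  | cons z r r' hz hb ih =>
    simp only [Srt, pairwise_cons] at hs ih ⊢
    refine ⟨fun a ha => ?_, ih hs.2⟩
    rcases hb.sub a ha with h | rfl
    · exact hs.1 a h
    · exact hz

theorem Bump.srt' {x y : ℕ} {r r' : List ℕ} (h : Bump x y r r') (hs : Srt r') : Srt r := by
  induction h with
  | repl t h1 h2 => simp_all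
  | spec t h => exact hs
  | cons z r r' hz hb ih =>
    simp only [Srt, pairwise_cons] at hs ih ⊢
    refine ⟨fun a ha => ?_, ih hs.2⟩
    have := hb.lt
    rcases hb.sup a ha with h | rfl
    · exact hs.1 a h
    · omega

/-- elements of the new row bigger than `x` are `y` or bigger -/
theorem Bump.big {x y : ℕ} {r r' : List ℕ} (h : Bump x y r r') (hs : Srt r) :
    ∀ z ∈ r', x < z → (z = y ∧ y = x + 1) ∨ y < z := by
  induction h with
  | repl t h1 h2 => grind
  | spec t h => simp only [Srt, pairwise_cons] at hs; grind
  | cons z r r' hz hb ih => simp only [Srt, pairwise_cons] at hs; grind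

/-- `y` is the smallest thing above `x` in the old row -/
theorem Bump.small {x y : ℕ} {r r' : List ℕ} (h : Bump x y r r') (hs : Srt r) :
    ∀ z ∈ r, x < z → y ≤ z := by
  induction h with
  | repl t h1 h2 => grind
  | spec t h => simp only [Srt, pairwise_cons] at hs; grind
  | cons z r r' hz hb ih => simp only [Srt, pairwise_cons] at hs; grind

theorem Bump.det {x y y' : ℕ} {r r' r'' : List ℕ} (h : Bump x y r r') (h' : Bump x y' r r'') :
    y' = y ∧ r'' = r' := by
  induction h generalizing r'' with
  | repl t h1 h2 => cases h' <;> grind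
  | spec t h => cases h' <;> grind
  | cons z r r' hz hb ih =>
    have := hb.lt
    cases h' with
    | repl => omega
    | spec => omega
    | cons _ _ _ _ h => have := ih h; simp [this]

theorem Bump.det' {x x' y : ℕ} {r r' r'' : List ℕ} (h : Bump x y r r') (h' : Bump x' y r'' r')
    (hs : Srt r') : x' = x ∧ r'' = r := by
  induction h generalizing r'' with
  | repl t h1 h2 =>
    cases h' with
    | repl _ h3 h4 => exact ⟨rfl, rfl⟩
    | spec t => exact absurd (h2 y (by simp)) (by omega)
    | cons _ r _ h h3 =>
      have := h3.mem_right; have := h2 _ this; have := h3.lt; omega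
  | spec t h =>
    cases h' with
    | repl _ h3 h4 => exact absurd (h4 y (by simp)) (by omega)
    | spec t => exact ⟨rfl, rfl⟩
    | cons _ r _ h h3 =>
      have := h3.mem_right
      have h5 := h3.lt
      simp only [Srt, pairwise_cons, mem_cons] at hs this
      rcases this with h6 | h6
      · omega
      · have := hs.2.1 _ h6
        omega
  | cons z r r' hz hb ih =>
    have h5 := hb.lt
    simp only [Srt, pairwise_cons] at hs
    cases h' with
    | repl _ h3 h4 => have := hb.mem_right; have := h4 _ this; omega
    | spec t h =>
      have := hb.mem_right
      simp only [mem_cons] at this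
      rcases this with h6 | h6
      · omega
      · have := (pairwise_cons.1 hs.2).1 _ h6
        omega
    | cons _ _ _ _ h => have := ih h hs.2; simp [this]

theorem Bump.exists {x : ℕ} {r : List ℕ} (hs : Srt r) (h1 : ∃ z ∈ r, x ≤ z)
    (h2 : x ∈ r → x + 1 ∈ r) : ∃ y r', Bump x y r r' := by
  induction r with
  | nil => simp at h1
  | cons z t ih =>
    simp only [Srt, pairwise_cons] at hs
    rcases lt_trichotomy x z with h | rfl | h
    · exact ⟨z, x :: t, .repl t h hs.1⟩
    · have h3 := h2 (by simp)
      simp at h3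
      cases t with
      | nil => simp at h3
      | cons b t =>
        have hb : b = x + 1 := by
          have := hs.1 b (by simp)
          simp at h3
          rcases h3 with h3 | h3
          · omega
          · have := (pairwise_cons.1 hs.2).1 _ h3
            omega
        subst hb
        exact ⟨x + 1, _, .spec t rfl⟩
    · obtain ⟨y, r', h5⟩ := ih hs.2 (by grind) (by grind)
      exact ⟨y, z :: r', .cons _ _ _ h h5⟩

theorem Bump.exists' {y : ℕ} {r : List ℕ} (hs : Srt r) (h1 : ∃ z ∈ r, z < y)
    (h2 : y ∈ r → ∃ z ∈ r, y = z + 1) : ∃ x r', Bump x y r' r := by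
  induction r with
  | nil => simp at h1
  | cons z t ih =>
    simp only [Srt, pairwise_cons] at hs
    by_cases h3 : ∃ z ∈ t, z < y
    · have : y ∈ t → ∃ z ∈ t, y = z + 1 := by
        intro h4
        obtain ⟨b, hb, hb'⟩ := h2 (by simp [h4])
        simp only [mem_cons] at hb
        rcases hb with rfl | hb
        · obtain ⟨c, hc, hc'⟩ := h3
          have := hs.1 c hc
          omega
        · exact ⟨b, hb, hb'⟩
      obtain ⟨x, r', h5⟩ := ih hs.2 h3 this
      exact ⟨x, z :: r', .cons _ _ _ (hs.1 _ h5.mem_right) h5⟩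
    · push Not at h3
      have hz : z < y := by
        obtain ⟨b, hb, hb'⟩ := h1
        simp only [mem_cons] at hb
        rcases hb with rfl | hb
        · exact hb'
        · have := h3 b hb; omega
      by_cases hy : y ∈ t
      · obtain ⟨b, hb, hb'⟩ := h2 (by simp [hy])
        have hbz : b = z := by
          simp only [mem_cons] at hb
          rcases hb with rfl | hb
          · rfl
          · have := h3 b hb; omega
        subst hbz
        cases t with
        | nil => simp at hy
        | cons c t =>
          have hc : c = y := by
            have := h3 c (by simp)
            simp at hy
            rcases hy with hy | hy
            · omega
            · have := (pairwise_cons.1 hs.2).1 _ hy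
              omega
          subst hc
          exact ⟨b, _, .spec t hb'⟩
      · refine ⟨z, y :: t, .repl t hz fun b hb => ?_⟩
        have := h3 b hb
        have : b ≠ y := by rintro rfl; exact hy hb
        omega

theorem Bump.above_mono {x y : ℕ} {r r' s : List ℕ} (h : Bump x y r r') (ha : Above r s) :
    Above r' s := by
  induction h generalizing s with
  | repl t h1 h2 =>
    cases s with
    | nil => simp
    | cons w s => simp at ha ⊢; exact ⟨by omega, ha.2⟩
  | spec t h => exact ha
  | cons z r r' hz hb ih =>
    cases s with
    | nil => simp
    | cons w s => simp at ha ⊢; exact ⟨by omega, ih ha.2⟩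

theorem Bump.above_mono' {x y : ℕ} {r s s' : List ℕ} (h : Bump x y s s') (ha : Above r s') :
    Above r s := by
  induction h generalizing r with
  | repl t h1 h2 =>
    cases r with
    | nil => simp at ha
    | cons w s => simp at ha ⊢; exact ⟨by omega, ha.2⟩
  | spec t h => exact ha
  | cons z s s' hz hb ih =>
    cases r with
    | nil => simp at ha
    | cons w s => simp at ha ⊢; exact ⟨by omega, ih ha.2⟩

theorem above_left {r s : List ℕ} {t : List ℕ} (h : Above r (s ++ t)) : Above r s := by
  induction s generalizing r with
  | nil => simp
  | cons w s ih =>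
    cases r with
    | nil => simp at h
    | cons z r => simp at h ⊢; exact ⟨h.1, ih h.2⟩

theorem above_mem {r s : List ℕ} {y : ℕ} (h : Above r s) (hy : y ∈ s) : ∃ z ∈ r, z < y := by
  induction s generalizing r with
  | nil => simp at hy
  | cons w s ih =>
    cases r with
    | nil => simp at h
    | cons z r =>
      simp at h hy
      rcases hy with rfl | hy
      · exact ⟨z, by simp, h.1⟩
      · obtain ⟨b, hb, hb'⟩ := ih h.2 hy
        exact ⟨b, by simp [hb], hb'⟩

theorem Bump.above_app {x y : ℕ} {r r' s : List ℕ} (h : Bump x y r r') (ha : Above r s)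
    (hs : ∀ z ∈ s, z < y) : Above r' (s ++ [y]) := by
  induction h generalizing s with
  | repl t h1 h2 =>
    cases s with
    | nil => simpa
    | cons w s => simp at ha hs; omega
  | spec t h =>
    cases s with
    | nil => simp; omega
    | cons w s => simp at ha hs; omega
  | cons z r r' hz hb ih =>
    have := hb.lt
    cases s with
    | nil => simp; omega
    | cons w s => simp at ha hs ⊢; exact ⟨ha.1, ih ha.2 hs.2⟩

theorem Bump.above_bump {x y z : ℕ} {r r' s s' : List ℕ} (h : Bump x y r r') (ha : Above r s)
    (hs : Bump y z s s') : Above r' s' := by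
  induction h generalizing s s' with
  | repl t h1 h2 =>
    cases hs with
    | repl s h3 h4 => simp at ha ⊢; exact ⟨h1, ha.2⟩
    | spec s h3 => simp at ha
    | cons w s s' h3 h4 => simp at ha; omega
  | spec t h =>
    cases hs with
    | repl s h3 h4 => simp at ha ⊢; exact ⟨by omega, ha.2⟩
    | spec s h3 => exact ha
    | cons w s s' h3 h4 => simp at ha; omega
  | cons w r r' hz hb ih =>
    have := hb.lt
    cases hs with
    | repl s h3 h4 => simp at ha ⊢; exact ⟨by omega, hb.above_mono ha.2⟩
    | spec s h3 => simp only [cons_above] at ha ⊢; exact ⟨by omega, hb.above_mono ha.2⟩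
    | cons w s s' h3 h4 => simp at ha ⊢; exact ⟨by omega, ih ha.2 h4⟩

theorem Bump.above_big {x y : ℕ} {r r' s : List ℕ} (h : Bump x y r r') (ha : Above r' s)
    (hs : ∀ z ∈ s, y < z) : Above r s := by
  induction h generalizing s with
  | repl t h1 h2 =>
    cases s with
    | nil => simp
    | cons w s => simp at ha hs ⊢; exact ⟨by omega, ha.2⟩
  | spec t h => exact ha
  | cons z r r' hz hb ih =>
    cases s with
    | nil => simp
    | cons w s => simp at ha hs ⊢; exact ⟨by omega, ih ha.2 hs.2⟩

theorem Bump.above_app' {x y : ℕ} {r r' s : List ℕ} (h : Bump x y r r')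
    (ha : Above r' (s ++ [y])) (hs : ∀ z ∈ s, z < y) : Above r s := by
  induction h generalizing s with
  | repl t h1 h2 =>
    cases s with
    | nil => simp
    | cons w s =>
      simp at ha hs
      obtain ⟨e, he, he'⟩ := above_mem (y := y) ha.2 (by simp)
      have := h2 e he
      omega
  | spec t h => exact above_left ha
  | cons z r r' hz hb ih =>
    cases s with
    | nil => simp
    | cons w s => simp at ha hs ⊢; exact ⟨ha.1, ih ha.2 hs.2⟩

theorem Bump.above_bump' {x y z : ℕ} {r r' s s' : List ℕ} (h : Bump x y r r') (ha : Above r' s')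
    (hs : Bump y z s s') (hss : Srt s') : Above r s := by
  induction h generalizing s s' with
  | repl t h1 h2 =>
    cases hs with
    | repl s h3 h4 => simp at ha ⊢; exact ⟨h3, ha.2⟩
    | spec s h3 =>
      simp only [cons_above] at ha
      cases t with
      | nil => simp at ha
      | cons e t => simp at ha h2; omega
    | cons w s s' h3 h4 =>
      simp at ha
      obtain ⟨e, he, he'⟩ := above_mem (y := y) ha.2 h4.mem_right
      have := h2 e he
      omega
  | spec t h => exact hs.above_mono' ha
  | cons w r r' hz hb ih =>
    have := hb.lt
    cases hs with
    | repl s h3 h4 =>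
      simp at ha ⊢
      exact ⟨by omega, hb.above_big ha.2 (pairwise_cons.1 hss).1⟩
    | spec s h3 =>
      rw [cons_above] at ha ⊢; exact ⟨by omega, hb.above_big ha.2 (pairwise_cons.1 hss).1⟩
    | cons w s s' h3 h4 => simp at ha ⊢; exact ⟨by omega, ih ha.2 h4 (pairwise_cons.1 hss).2⟩

theorem Bump.perm {x y : ℕ} {r r' : List ℕ} (h : Bump x y r r') (hs : Srt r) :
    toPerm (r ++ [x]) = toPerm (y :: r') := by
  induction h with
  | repl t h1 h2 =>
    simp only [toPerm_append, toPerm_cons, toPerm_nil, mul_one, cons_append]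
    rw [toPerm_comm_gt]
    intro z hz
    have := h2 z hz
    omega
  | spec t h =>
    subst h
    simp only [Srt, pairwise_cons] at hs
    simp only [toPerm_append, toPerm_cons, toPerm_nil, mul_one, cons_append]
    rw [toPerm_comm_gt]
    · have := braid x
      simp only [← mul_assoc] at this ⊢
      rw [this]
    · intro z hz
      have := hs.2.1 z hz
      omega
  | cons z r r' hz hb ih =>
    have := hb.lt
    simp only [Srt, pairwise_cons] at hs
    have ih := ih hs.2
    simp only [toPerm_append, toPerm_cons, toPerm_nil, mul_one, cons_append] at ih ⊢
    rw [ih, ← mul_assoc, swap_comm_far (by omega), mul_assoc]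

end EG

namespace EG

theorem wordOf_cons (r : List ℕ) (R : List (List ℕ)) : wordOf (r :: R) = wordOf R ++ r := by
  simp [wordOf]

theorem wordOf_nil : wordOf [] = [] := rfl

theorem mem_wordOf {z : ℕ} {T : List (List ℕ)} : z ∈ wordOf T ↔ z ∈ T.flatten := by
  simp [wordOf]

def Tab : List (List ℕ) → Prop
  | [] => True
  | r :: R => r ≠ [] ∧ Srt r ∧ Above r (R.headD []) ∧ Tab R

inductive Ins : ℕ → List (List ℕ) → List (List ℕ) → ℕ → Prop
  | nil (x : ℕ) : Ins x [] [[x]] 0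
  | app (x : ℕ) (r : List ℕ) (R : List (List ℕ)) : r ≠ [] → (∀ z ∈ r, z < x) →
      Ins x (r :: R) ((r ++ [x]) :: R) 0
  | bump {x y : ℕ} {r r' : List ℕ} {R R' : List (List ℕ)} {k : ℕ} : Bump x y r r' →
      Ins y R R' k → Ins x (r :: R) (r' :: R') (k + 1)

def Corner : List ℕ → ℕ → Prop
  | [], _ => False
  | a :: L, 0 => L.headD 0 < a
  | _ :: L, k + 1 => Corner L k

theorem Ins.head {y k : ℕ} {R R' : List (List ℕ)} (h : Ins y R R' k) :
    (R'.headD [] = R.headD [] ++ [y] ∧ ∀ z ∈ R.headD [], z < y) ∨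
      ∃ z, Bump y z (R.headD []) (R'.headD []) := by
  cases h with
  | nil => simp
  | app _ _ _ _ h2 => exact Or.inl ⟨rfl, h2⟩
  | bump h1 h2 => exact Or.inr ⟨_, by simpa⟩

theorem Ins.mem_head {y k : ℕ} {R R' : List (List ℕ)} (h : Ins y R R' k) : y ∈ R'.headD [] := by
  rcases h.head with h | ⟨z, h⟩
  · rw [h.1]; simp
  · exact h.mem_right

theorem Ins.word_len {x k : ℕ} {T T' : List (List ℕ)} (h : Ins x T T' k) :
    (wordOf T').length = (wordOf T).length + 1 := by
  induction h with
  | nil => simp [wordOf]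
  | app => simp [wordOf_cons]; omega
  | bump h1 h2 ih => simp [wordOf_cons, ih, h1.length]; omega

theorem Ins.perm {x k : ℕ} {T T' : List (List ℕ)} (h : Ins x T T' k) (ht : Tab T) :
    toPerm (wordOf T') = toPerm (wordOf T ++ [x]) := by
  induction h with
  | nil => simp [wordOf]
  | app => simp [wordOf_cons]
  | bump h1 h2 ih =>
    have := h1.perm ht.2.1
    have ih := ih ht.2.2.2
    simp only [wordOf_cons, toPerm_append, toPerm_cons, toPerm_nil, mul_one] at *
    rw [ih, mul_assoc, ← this, mul_assoc]

theorem mem_headD {R : List (List ℕ)} {y : ℕ} (h : y ∈ R.headD []) : y ∈ R.flatten := by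
  cases R with
  | nil => simp at h
  | cons r R => simp at h; simp [h]

theorem Ins.mem_iff {x k : ℕ} {T T' : List (List ℕ)} (h : Ins x T T' k) (z : ℕ) :
    z ∈ T'.flatten ↔ z ∈ T.flatten ∨ z = x := by
  induction h with
  | nil => simp
  | app => simp only [flatten_cons, mem_append, mem_singleton]; tauto
  | @bump x y r r' R R' k h1 h2 ih =>
    simp only [flatten_cons, mem_append]
    constructor
    · rintro (h | h)
      · have := h1.sub z h; tauto
      · rcases ih.1 h with h | rfl
        · tauto
        · have := h1.mem_left; tauto
    · rintro ((h | h) | rfl)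
      · rcases h1.sup z h with h | rfl
        · tauto
        · exact Or.inr (ih.2 (Or.inr rfl))
      · tauto
      · exact Or.inl h1.mem_right

theorem Ins.red {x k : ℕ} {T T' : List (List ℕ)} (h : Ins x T T' k) (ht : Tab T) :
    IsReducedWord (wordOf T') ↔ IsReducedWord (wordOf T ++ [x]) := by
  have h1 : ∀ z, z ∈ wordOf T' ↔ z ∈ wordOf T ++ [x] := by
    intro z
    simp only [mem_append, mem_wordOf, mem_singleton]
    exact h.mem_iff z
  constructor
  · intro hr
    exact red_of_eq hr (fun i hi => hr.1 i ((h1 i).2 hi)) (h.perm ht).symm (by simp [h.word_len])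
  · intro hr
    exact red_of_eq hr (fun i hi => hr.1 i ((h1 i).1 hi)) (h.perm ht) (by simp [h.word_len])

theorem above_append {r s t : List ℕ} (h : Above r s) : Above (r ++ t) s := by
  induction s generalizing r with
  | nil => simp
  | cons w s ih =>
    cases r with
    | nil => simp at h
    | cons z r => simp at h ⊢; exact ⟨h.1, ih h.2⟩

theorem above_shrink {r s t : List ℕ} (h : Above (r ++ t) s) (hl : s.length ≤ r.length) :
    Above r s := by
  induction s generalizing r with
  | nil => simp
  | cons w s ih =>
    cases r with
    | nil => simp at hl
    | cons z r => simp at h hl ⊢; exact ⟨h.1, ih h.2 hl⟩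

theorem above_len {r s : List ℕ} (h : Above r s) : s.length ≤ r.length := by
  induction s generalizing r with
  | nil => simp
  | cons w s ih =>
    cases r with
    | nil => simp at h
    | cons z r => simp at h ⊢; exact ih h.2

theorem srt_snoc {r : List ℕ} {x : ℕ} : Srt (r ++ [x]) ↔ Srt r ∧ ∀ z ∈ r, z < x := by
  simp [Srt, pairwise_append]

theorem Ins.tab {x k : ℕ} {T T' : List (List ℕ)} (h : Ins x T T' k) (ht : Tab T) : Tab T' := by
  induction h with
  | nil => simp [Tab]
  | app x r R h1 h2 =>
    exact ⟨by simp, srt_snoc.2 ⟨ht.2.1, h2⟩, above_append ht.2.2.1, ht.2.2.2⟩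
  | @bump x y r r' R R' k h1 h2 ih =>
    refine ⟨?_, h1.srt ht.2.1, ?_, ih ht.2.2.2⟩
    · have := h1.mem_right
      rintro rfl
      simp at this
    · rcases h2.head with ⟨h, h'⟩ | ⟨z, h⟩
      · rw [h]
        exact h1.above_app ht.2.2.1 h'
      · exact h1.above_bump ht.2.2.1 h

theorem Ins.exists (x : ℕ) (T : List (List ℕ)) (ht : Tab T) (hr : IsReducedWord (wordOf T ++ [x])) :
    ∃ T' k, Ins x T T' k := by
  induction T generalizing x with
  | nil => exact ⟨_, _, .nil x⟩
  | cons r R ih =>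
    rw [wordOf_cons, append_assoc] at hr
    by_cases h : ∀ z ∈ r, z < x
    · exact ⟨_, _, .app x r R ht.1 h⟩
    · push Not at h
      obtain ⟨y, r', hb⟩ := Bump.exists ht.2.1 h (red_R1 ht.2.1 hr)
      have hr2 : IsReducedWord (wordOf R ++ [y] ++ r') := by
        refine red_of_eq hr ?_ ?_ ?_
        · intro i hi
          apply hr.1
          have h1 := hb.mem_left
          have h2 := hb.sub i
          simp only [mem_append, mem_singleton] at hi ⊢
          rcases hi with (hi | rfl) | hi <;> tauto
        · have := hb.perm ht.2.1
          rw [toPerm_append (wordOf R), this]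
          simp [toPerm_append, toPerm_cons]
        · simp [hb.length]
      obtain ⟨R', k, hi⟩ := ih y ht.2.2.2 (red_left hr2)
      exact ⟨_, _, .bump hb hi⟩

theorem Ins.det {x k k' : ℕ} {T T' T'' : List (List ℕ)} (h : Ins x T T' k) (h' : Ins x T T'' k') :
    T'' = T' ∧ k' = k := by
  induction h generalizing T'' k' with
  | nil => cases h'; simp
  | app x r R h1 h2 =>
    cases h' with
    | app => simp
    | bump h3 h4 => exact absurd (h2 _ h3.mem_left) (by have := h3.lt; omega)
  | bump h1 h2 ih =>
    cases h' with
    | app _ _ _ h3 h4 => exact absurd (h4 _ h1.mem_left) (by have := h1.lt; omega)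
    | bump h3 h4 =>
      obtain ⟨rfl, rfl⟩ := h1.det h3
      obtain ⟨rfl, rfl⟩ := ih h4
      simp

theorem Ins.det' {x x' k : ℕ} {T T' T'' : List (List ℕ)} (h : Ins x T T' k) (h' : Ins x' T'' T' k)
    (ht : Tab T') : x' = x ∧ T'' = T := by
  induction h generalizing T'' x' with
  | nil =>
    generalize hg : [[_]] = G at h'
    cases h' with
    | nil => simpa using hg.symm
    | app r R _ h2 =>
      have h3 := congrArg List.length (List.cons.inj hg).1
      simp at h3
      exact absurd h3 h2
  | app x r R h1 h2 =>
    generalize hg : (r ++ [x]) :: R = G at h'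
    cases h' with
    | nil =>
      have h3 := congrArg List.length (List.cons.inj hg).1
      simp at h3
      exact absurd h3 h1
    | app x' r' R' h3 h4 =>
      simp only [cons.injEq] at hg
      have := List.append_inj' hg.1 rfl
      simp_all
  | bump h1 h2 ih =>
    cases h' with
    | bump h3 h4 =>
      obtain ⟨rfl, rfl⟩ := ih h4 ht.2.2.2
      obtain ⟨rfl, rfl⟩ := h1.det' h3 ht.2.1
      simp

theorem Ins.exists' (k : ℕ) (T' : List (List ℕ)) (ht : Tab T') (hr : IsReducedWord (wordOf T'))
    (hc : Corner (T'.map List.length) k) : ∃ x T, Tab T ∧ Ins x T T' k := by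
  induction T' generalizing k with
  | nil => simp [Corner] at hc
  | cons r' R' ih =>
    rw [wordOf_cons] at hr
    obtain ⟨ht1, ht2, ht3, ht4⟩ := ht
    cases k with
    | zero =>
      rcases List.eq_nil_or_concat r' with rfl | ⟨r, x, rfl⟩
      · simp at ht1
      · simp only [List.concat_eq_append, Corner, map_cons, length_append, length_singleton] at *
        rw [srt_snoc] at ht2
        by_cases hn : r = []
        · subst hn
          cases R' with
          | nil => exact ⟨x, [], trivial, .nil x⟩
          | cons s S =>
            have := ht4.1
            simp at hc
            simp [hc] at this
        · refine ⟨x, r :: R', ⟨hn, ht2.1, above_shrink ht3 ?_, ht4⟩, .app x r R' hn ht2.2⟩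
          cases R' with
          | nil => simp
          | cons s S => simp at hc ⊢; omega
    | succ k =>
      obtain ⟨y, R, hR, hi⟩ := ih k ht4 (red_left hr) hc
      have hr2 : IsReducedWord (wordOf R ++ (y :: r')) := by
        refine red_of_eq hr ?_ ?_ ?_
        · intro i hi'
          apply hr.1
          have := (hi.mem_iff i).2
          simp only [mem_append, mem_cons, mem_wordOf] at hi' ⊢
          tauto
        · have := hi.perm hR
          simp only [toPerm_append, toPerm_cons, toPerm_nil, mul_one] at this ⊢
          rw [this, mul_assoc]
        · simp [hi.word_len]; omega
      obtain ⟨x, r, hb⟩ := Bump.exists' ht2 (above_mem ht3 hi.mem_head) (red_R2 ht2 hr2)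
      refine ⟨x, r :: R, ⟨?_, hb.srt' ht2, ?_, hR⟩, .bump hb hi⟩
      · have := hb.mem_left
        rintro rfl
        simp at this
      · rcases hi.head with ⟨h, h'⟩ | ⟨z, h⟩
        · rw [h] at ht3
          exact hb.above_app' ht3 h'
        · refine hb.above_bump' ht3 h ?_
          cases R' with
          | nil => simp
          | cons s S => exact ht4.2.1

theorem Ins.row_lt {x x' k k' : ℕ} {T T' T'' : List (List ℕ)} (ht : Tab T) (h : Ins x T T' k)
    (h' : Ins x' T' T'' k') (hx : x < x') : k' ≤ k := by
  induction h generalizing x' T'' k' with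
  | nil x =>
    cases h' with
    | app => simp
    | bump h3 h4 => have := h3.mem_left; have := h3.lt; simp_all; omega
  | app x r R h1 h2 =>
    cases h' with
    | app => simp
    | bump h3 h4 =>
      have h5 := h3.mem_left; have := h3.lt
      simp at h5
      rcases h5 with h5 | h5
      · have := h2 _ h5; omega
      · omega
  | @bump x y r r' R R' k h1 h2 ih =>
    cases h' with
    | app => simp
    | bump h3 h4 =>
      have h5 := h3.mem_left; have := h3.lt
      have := h1.big ht.2.1 _ h5 (by omega)
      have := ih ht.2.2.2 h4 (by omega)
      omega

theorem Ins.row_gt {x x' k k' : ℕ} {T T' T'' : List (List ℕ)} (ht : Tab T) (h : Ins x T T' k)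
    (h' : Ins x' T' T'' k') (hx : x' < x) : k < k' := by
  induction h generalizing x' T'' k' with
  | nil x =>
    cases h' with
    | app _ _ _ _ h => simp at h; omega
    | bump h3 h4 => omega
  | app x r R h1 h2 =>
    cases h' with
    | app _ _ _ _ h => have := h x (by simp); omega
    | bump h3 h4 => omega
  | @bump x y r r' R R' k h1 h2 ih =>
    cases h' with
    | app _ _ _ _ h => have := h _ h1.mem_right; omega
    | bump h3 h4 =>
      have h5 := h3.small (h1.srt ht.2.1) _ h1.mem_right hx
      have := h1.lt
      have := ih ht.2.2.2 h4 (by omega)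
      omega

end EG

namespace EG

def appQ : List (List ℕ) → ℕ → ℕ → List (List ℕ)
  | [], 0, e => [[e]]
  | [], k + 1, e => [] :: appQ [] k e
  | r :: R, 0, e => (r ++ [e]) :: R
  | r :: R, k + 1, e => r :: appQ R k e

theorem Ins.lens {x k e : ℕ} {P P' Q : List (List ℕ)} (h : Ins x P P' k)
    (hl : P.map List.length = Q.map List.length) :
    P'.map List.length = (appQ Q k e).map List.length := by
  induction h generalizing Q with
  | nil => cases Q <;> simp_all [appQ]
  | app => cases Q <;> simp_all [appQ]
  | bump h1 h2 ih =>
    cases Q with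
    | nil => simp at hl
    | cons q Q => simp [appQ] at hl ⊢; exact ⟨by rw [h1.length, hl.1], ih hl.2⟩

theorem Ins.lens' {x k e : ℕ} {P P' Q : List (List ℕ)} (h : Ins x P P' k) (hQ : [] ∉ Q)
    (hl : P'.map List.length = (appQ Q k e).map List.length) :
    P.map List.length = Q.map List.length := by
  induction h generalizing Q with
  | nil => cases Q <;> simp_all [appQ]
  | app x r R h1 h2 =>
    cases Q with
    | nil => simp_all [appQ]
    | cons q Q => simp_all [appQ]
  | bump h1 h2 ih =>
    cases Q with
    | nil =>
      simp [appQ] at hl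
      have := h1.mem_right
      rw [hl.1] at this
      simp at this
    | cons q Q =>
      simp [appQ] at hl hQ ⊢
      exact ⟨by rw [← h1.length, hl.1], ih hQ.2 hl.2⟩

theorem appQ_inj {Q Q' : List (List ℕ)} {k k' e : ℕ} (h : appQ Q k e = appQ Q' k' e)
    (h1 : e ∉ Q.flatten) (h2 : e ∉ Q'.flatten) (h3 : [] ∉ Q) (h4 : [] ∉ Q') :
    Q = Q' ∧ k = k' := by
  induction Q generalizing Q' k k' with
  | nil =>
    cases Q' with
    | nil =>
      simp
      induction k generalizing k' with
      | zero => cases k' <;> simp_all [appQ]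
      | succ k ih =>
        cases k' with
        | zero => simp_all [appQ]
        | succ k' => simp only [appQ, cons.injEq, true_and] at h; simp [ih h]
    | cons q Q' =>
      have hq : q ≠ [] := by rintro rfl; simp at h4
      cases k <;> cases k' <;> simp [appQ] at h
      · exact absurd h.1 hq
      · exact absurd (by simp [← h.1]) h2
      · exact absurd h.1 hq
  | cons r R ih =>
    cases Q' with
    | nil =>
      have hq : r ≠ [] := by rintro rfl; simp at h3
      cases k <;> cases k' <;> simp [appQ] at h
      · exact absurd h.1 hq
      · exact absurd (by simp [h.1]) h1
      · exact absurd h.1 hq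
    | cons q Q' =>
      cases k with
      | zero =>
        cases k' with
        | zero => simp_all [appQ]
        | succ k' =>
          simp only [appQ, cons.injEq] at h
          exfalso; apply h2; simp [← h.1]
      | succ k =>
        cases k' with
        | zero =>
          simp only [appQ, cons.injEq] at h
          exfalso; apply h1; simp [h.1]
        | succ k' =>
          simp only [appQ, cons.injEq] at h
          simp at h1 h2 h3 h4
          have := ih h.2 (by simpa using h1.2) (by simpa using h2.2) h3.2 h4.2
          simp [h.1, this]

theorem appQ_head (Q : List (List ℕ)) (k e : ℕ) :
    (appQ Q k e).headD [] = Q.headD [] ++ (if k = 0 then [e] else []) := by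
  cases Q <;> cases k <;> simp [appQ]

theorem appQ_perm (Q : List (List ℕ)) (k e : ℕ) :
    (appQ Q k e).flatten.Perm (e :: Q.flatten) := by
  induction Q generalizing k with
  | nil =>
    induction k with
    | zero => simp [appQ]
    | succ k ih => simpa [appQ] using ih
  | cons r R ih =>
    cases k with
    | zero => simp only [appQ, flatten_cons, append_assoc]; exact perm_middle
    | succ k =>
      simp only [appQ, flatten_cons]
      exact ((ih k).append_left r).trans perm_middle

theorem above_snoc {q s : List ℕ} {e : ℕ} (h : Above q s) (hl : s.length < q.length)
    (he : ∀ z ∈ q, z < e) : Above q (s ++ [e]) := by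
  induction s generalizing q with
  | nil =>
    cases q with
    | nil => simp at hl
    | cons z q => simp at he ⊢; exact he.1
  | cons w s ih =>
    cases q with
    | nil => simp at h
    | cons z q => simp at h hl he ⊢; exact ⟨h.1, ih h.2 hl he.2⟩

theorem above_len_lt {q s : List ℕ} {e : ℕ} (h : Above (q ++ [e]) s) (he : ∀ z ∈ s, z ≤ e) :
    s.length ≤ q.length := by
  induction s generalizing q with
  | nil => simp
  | cons w s ih =>
    cases q with
    | nil => simp at h he; omega
    | cons z q => simp at h he ⊢; exact ih h.2 he.2

theorem tab_nil {T : List (List ℕ)} (h : Tab T) : [] ∉ T := by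
  induction T with
  | nil => simp
  | cons r R ih => simp; exact ⟨fun h' => h.1 h', ih h.2.2.2⟩

theorem appQ_tab {Q P : List (List ℕ)} {k e : ℕ} (hQ : Tab Q) (hP : Tab P)
    (he : ∀ z ∈ Q.flatten, z < e) (hl : P.map List.length = (appQ Q k e).map List.length) :
    Tab (appQ Q k e) := by
  induction Q generalizing P k with
  | nil =>
    cases k with
    | zero => simp [appQ, Tab]
    | succ k =>
      cases P with
      | nil => simp [appQ] at hl
      | cons r R => simp [appQ] at hl; exact absurd hl.1 hP.1
  | cons q Q ih =>
    cases P with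
    | nil => cases k <;> simp [appQ] at hl
    | cons r R =>
      simp only [flatten_cons, mem_append] at he
      cases k with
      | zero =>
        exact ⟨by simp, srt_snoc.2 ⟨hQ.2.1, fun z hz => he z (Or.inl hz)⟩,
          above_append hQ.2.2.1, hQ.2.2.2⟩
      | succ k =>
        simp only [appQ, map_cons, cons.injEq] at hl
        refine ⟨hQ.1, hQ.2.1, ?_, ih hQ.2.2.2 hP.2.2.2 (fun z hz => he z (Or.inr hz)) hl.2⟩
        have h1 := above_len hP.2.2.1
        have h2 : (R.headD []).length = ((appQ Q k e).headD []).length := by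
          have h3 := congrArg (fun l => l.headD 0) hl.2
          cases hR : R <;> cases hA : appQ Q k e <;> simp_all
        rw [h2, hl.1] at h1
        rw [appQ_head] at h1 ⊢
        split_ifs with hk
        · simp only [hk, if_true, length_append, length_singleton] at h1
          exact above_snoc hQ.2.2.1 (by omega) (fun z hz => he z (Or.inl hz))
        · simpa using hQ.2.2.1

theorem appQ_exists {Q : List (List ℕ)} {e : ℕ} (hQ : Tab Q) (he : e ∈ Q.flatten)
    (hm : ∀ z ∈ Q.flatten, z ≤ e) :
    ∃ k Q0, Q = appQ Q0 k e ∧ Tab Q0 ∧ Corner (Q.map List.length) k := by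
  induction Q with
  | nil => simp at he
  | cons q Q ih =>
    obtain ⟨h1, h2, h3, h4⟩ := hQ
    simp only [flatten_cons, mem_append] at he hm
    by_cases hq : e ∈ q
    · rcases List.eq_nil_or_concat q with rfl | ⟨q0, x, rfl⟩
      · simp at h1
      · simp only [List.concat_eq_append] at *
        rw [srt_snoc] at h2
        have hx : x = e := by
          have := hm x (by simp)
          simp at hq
          rcases hq with hq | hq
          · have := h2.2 e hq; omega
          · exact hq.symm
        subst hx
        have hlen := above_len_lt h3 (fun z hz => hm z (Or.inr (mem_headD hz)))
        by_cases h0 : q0 = []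
        · subst h0
          cases Q with
          | nil => exact ⟨0, [], rfl, trivial, by simp [Corner]⟩
          | cons r R => simp at hlen; exact absurd hlen h4.1
        · refine ⟨0, q0 :: Q, rfl, ⟨h0, h2.1, above_shrink h3 hlen, h4⟩, ?_⟩
          cases Q with
          | nil => simp [Corner]
          | cons r R => simp [Corner] at hlen ⊢; omega
    · obtain ⟨k, Q0, e1, e2, e3⟩ := ih h4 (by tauto) (fun z hz => hm z (Or.inr hz))
      refine ⟨k + 1, q :: Q0, by simp [appQ, e1], ⟨h1, h2, ?_, e2⟩, e3⟩
      rw [e1, appQ_head] at h3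
      exact above_left h3

inductive RS : List ℕ → List (List ℕ) → List (List ℕ) → Prop
  | nil : RS [] [] []
  | cons {ρ : List ℕ} {P Q P' : List (List ℕ)} {x k : ℕ} : RS ρ P Q → Ins x P P' k →
      RS (x :: ρ) P' (appQ Q k (ρ.length + 1))

theorem RS.tabP {ρ P Q} (h : RS ρ P Q) : Tab P := by
  induction h with
  | nil => trivial
  | cons h1 h2 ih => exact h2.tab ih

theorem RS.lens {ρ P Q} (h : RS ρ P Q) : P.map List.length = Q.map List.length := by
  induction h with
  | nil => rfl
  | cons h1 h2 ih => exact h2.lens ih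

theorem RS.permQ {ρ P Q} (h : RS ρ P Q) : Q.flatten.Perm (List.range' 1 ρ.length) := by
  induction h with
  | nil => simp
  | @cons ρ P Q P' x k h1 h2 ih =>
    refine (appQ_perm _ _ _).trans ?_
    rw [length_cons, range'_concat]
    refine (ih.cons _).trans ?_
    rw [show 1 + 1 * ρ.length = ρ.length + 1 by omega]
    exact (perm_append_singleton _ _).symm

theorem RS.mem_le {ρ P Q} (h : RS ρ P Q) (z : ℕ) : z ∈ Q.flatten ↔ 1 ≤ z ∧ z ≤ ρ.length := by
  rw [h.permQ.mem_iff, mem_range'_1]; omega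

theorem RS.tabQ {ρ P Q} (h : RS ρ P Q) : Tab Q := by
  induction h with
  | nil => trivial
  | cons h1 h2 ih =>
    refine appQ_tab ih (h2.tab h1.tabP) (fun z hz => ?_) (h2.lens h1.lens)
    have := (h1.mem_le z).1 hz
    omega

theorem RS.perm {ρ P Q} (h : RS ρ P Q) : toPerm (wordOf P) = toPerm ρ.reverse := by
  induction h with
  | nil => rfl
  | cons h1 h2 ih =>
    rw [h2.perm h1.tabP, toPerm_append, ih, reverse_cons, toPerm_append]

theorem RS.len {ρ P Q} (h : RS ρ P Q) : (wordOf P).length = ρ.length := by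
  induction h with
  | nil => rfl
  | cons h1 h2 ih => simp [h2.word_len, ih]

theorem RS.mem {ρ P Q} (h : RS ρ P Q) (z : ℕ) : z ∈ wordOf P ↔ z ∈ ρ := by
  induction h with
  | nil => simp [wordOf]
  | cons h1 h2 ih => rw [mem_wordOf] at *; rw [h2.mem_iff, ih, mem_cons, or_comm]

theorem RS.red {ρ P Q} (h : RS ρ P Q) : IsReducedWord ρ ↔ IsReducedWord (wordOf P) := by
  constructor
  · intro hr
    exact red_of_eq (red_reverse hr) (fun i hi => hr.1 i ((h.mem i).1 hi)) h.perm (by simp [h.len])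
  · intro hr
    have := red_of_eq (b := ρ.reverse) hr (fun i hi => hr.1 i ((h.mem i).2 (by simpa using hi)))
      h.perm.symm (by simp [h.len])
    simpa using red_reverse this

theorem RS.exists (ρ : List ℕ) (h : IsReducedWord ρ) : ∃ P Q, RS ρ P Q := by
  induction ρ with
  | nil => exact ⟨_, _, .nil⟩
  | cons x ρ ih =>
    obtain ⟨P, Q, h1⟩ := ih (red_tail h)
    obtain ⟨P', k, h2⟩ := Ins.exists x P h1.tabP (by
      refine red_of_eq (red_reverse h) ?_ ?_ ?_
      · intro i hi
        apply h.1
        simp only [mem_append, h1.mem, mem_singleton] at hi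
        simp; tauto
      · rw [reverse_cons, toPerm_append, toPerm_append, h1.perm]
      · simp [h1.len])
    exact ⟨_, _, .cons h1 h2⟩

theorem RS.det {ρ P Q P' Q'} (h : RS ρ P Q) (h' : RS ρ P' Q') : P' = P ∧ Q' = Q := by
  induction h generalizing P' Q' with
  | nil => cases h'; simp
  | cons h1 h2 ih =>
    cases h' with
    | cons h3 h4 =>
      obtain ⟨rfl, rfl⟩ := ih h3
      obtain ⟨rfl, rfl⟩ := h2.det h4
      simp

theorem RS.det' {ρ ρ' P Q} (h : RS ρ P Q) (h' : RS ρ' P Q) : ρ' = ρ := by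
  have hl : ρ'.length = ρ.length := by rw [← h.len, ← h'.len]
  induction h generalizing ρ' with
  | nil => simpa using hl
  | @cons ρ P Q P' x k h1 h2 ih =>
    generalize hg : appQ Q k (ρ.length + 1) = G at h'
    cases h' with
    | nil => simp at hl
    | @cons ρ1 P1 Q1 _ x1 k1 h3 h4 =>
      simp at hl
      rw [hl] at hg
      obtain ⟨rfl, rfl⟩ := appQ_inj hg
        (fun hc => by have := (h1.mem_le _).1 hc; omega)
        (fun hc => by have := (h3.mem_le _).1 hc; omega) (tab_nil h1.tabQ) (tab_nil h3.tabQ)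
      obtain ⟨rfl, rfl⟩ := h2.det' h4 (h2.tab h1.tabP)
      rw [ih h3 hl]

theorem RS.exists' (n : ℕ) (P Q : List (List ℕ)) (hP : Tab P) (hr : IsReducedWord (wordOf P))
    (hQ : Tab Q) (hl : P.map List.length = Q.map List.length)
    (hp : Q.flatten.Perm (List.range' 1 n)) : ∃ ρ, ρ.length = n ∧ RS ρ P Q := by
  induction n generalizing P Q with
  | zero =>
    have : Q = [] := by
      cases Q with
      | nil => rfl
      | cons q Q => simp at hp; exact absurd hp.1 hQ.1
    subst this
    simp at hl
    subst hl
    exact ⟨[], rfl, .nil⟩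
  | succ n ih =>
    obtain ⟨k, Q0, rfl, h2, h3⟩ := appQ_exists (e := n + 1) hQ
      (by rw [hp.mem_iff, mem_range'_1]; omega)
      (fun z hz => by rw [hp.mem_iff, mem_range'_1] at hz; omega)
    rw [← hl] at h3
    obtain ⟨x, P0, h4, h5⟩ := Ins.exists' k P hP hr h3
    have h6 := h5.lens' (tab_nil h2) hl
    have hp2 : Q0.flatten.Perm (List.range' 1 n) := by
      have h7 := (appQ_perm Q0 k (n+1)).symm.trans hp
      rw [range'_concat, show 1 + 1 * n = n + 1 by omega] at h7
      exact (h7.trans (perm_append_singleton _ _)).cons_inv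
    obtain ⟨ρ, h8, h9⟩ := ih P0 Q0 h4 (red_left ((h5.red h4).1 hr)) h2 h6 hp2
    refine ⟨x :: ρ, by simp [h8], ?_⟩
    rw [← h8]
    exact .cons h9 h5

end EG

namespace EG

theorem rowOf_cons (r : List ℕ) (R : List (List ℕ)) (z : ℕ) :
    rowOf (r :: R) z = if z ∈ r then 0 else rowOf R z + 1 := by
  unfold rowOf
  rw [List.findIdx_cons]
  by_cases h : z ∈ r <;> simp [h]

theorem rowOf_appQ_self (Q : List (List ℕ)) (k e : ℕ) (h : e ∉ Q.flatten) :
    rowOf (appQ Q k e) e = k := by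
  induction Q generalizing k with
  | nil =>
    induction k with
    | zero => simp [appQ, rowOf_cons]
    | succ k ih => simp [appQ, rowOf_cons, ih]
  | cons r R ih =>
    rw [flatten_cons, mem_append, not_or] at h
    cases k with
    | zero => simp [appQ, rowOf_cons]
    | succ k => simp [appQ, rowOf_cons, ih _ h.2, h.1]

theorem rowOf_appQ_other (Q : List (List ℕ)) (k e z : ℕ) (h : z ∈ Q.flatten) (hz : z ≠ e) :
    rowOf (appQ Q k e) z = rowOf Q z := by
  induction Q generalizing k with
  | nil => simp at h
  | cons r R ih =>
    rw [flatten_cons, mem_append] at h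
    cases k with
    | zero => simp [appQ, rowOf_cons, hz]
    | succ k =>
      simp only [appQ, rowOf_cons]
      split_ifs with h1
      · rfl
      · rw [ih _ (by tauto)]

def glue (b : Bool) : List ℕ → List ℕ
  | [] => [1]
  | h :: t => if b then 1 :: h :: t else (h + 1) :: t

def cl (brk : ℕ → ℕ → Bool) : List ℕ → List ℕ
  | [] => []
  | [_] => [1]
  | a :: b :: rest => glue (brk a b) (cl brk (b :: rest))

theorem splitWhen_ne (brk : ℕ → ℕ → Bool) (a : ℕ) (l : List ℕ) : splitWhen brk (a :: l) ≠ [] := by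
  cases l with
  | nil => simp [splitWhen]
  | cons b l =>
    rw [splitWhen]
    split
    · split_ifs <;> simp
    · simp

theorem cl_eq (brk : ℕ → ℕ → Bool) (l : List ℕ) : (splitWhen brk l).map List.length = cl brk l := by
  induction l with
  | nil => rfl
  | cons a l ih =>
    cases l with
    | nil => rfl
    | cons b l =>
      rw [splitWhen, cl, ← ih]
      cases h : splitWhen brk (b :: l) with
      | nil => exact absurd h (splitWhen_ne _ _ _)
      | cons r rs => simp only [glue, map_cons]; split_ifs <;> simp

theorem cl_ne (brk : ℕ → ℕ → Bool) (a : ℕ) (l : List ℕ) : cl brk (a :: l) ≠ [] := by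
  rw [← cl_eq]; simpa using splitWhen_ne _ _ _

theorem glue_comm (b c : Bool) (L : List ℕ) (h : L ≠ []) :
    glue b (glue c L.reverse).reverse = (glue c (glue b L).reverse).reverse := by
  cases L with
  | nil => simp at h
  | cons x L =>
    rcases List.eq_nil_or_concat L with rfl | ⟨m, y, rfl⟩
    · cases b <;> cases c <;> simp [glue]
    · cases b <;> cases c <;> simp [glue]

theorem cl_snoc (brk : ℕ → ℕ → Bool) (l : List ℕ) (b a : ℕ) :
    cl brk (l ++ [b, a]) = (glue (brk b a) (cl brk (l ++ [b])).reverse).reverse := by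
  induction l with
  | nil => simp [cl, glue]; split_ifs <;> simp
  | cons c l ih =>
    cases l with
    | nil =>
      have := ih
      simp only [nil_append, cons_append] at this ⊢
      change glue (brk c b) (cl brk [b, a]) =
        (glue (brk b a) (glue (brk c b) (cl brk [b])).reverse).reverse
      rw [this, glue_comm _ _ _ (cl_ne _ _ _)]
    | cons d l =>
      simp only [cons_append] at ih ⊢
      rw [cl, ih, cl, glue_comm _ _ _ (cl_ne _ _ _)]

theorem cl_reverse (brk : ℕ → ℕ → Bool) (l : List ℕ) :
    cl brk l.reverse = (cl (fun a b => brk b a) l).reverse := by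
  induction l with
  | nil => rfl
  | cons a l ih =>
    cases l with
    | nil => rfl
    | cons b l =>
      have : (a :: b :: l).reverse = l.reverse ++ [b, a] := by simp
      rw [this, cl_snoc, cl]
      rw [reverse_cons] at ih
      rw [ih, reverse_reverse]

theorem cl_congr_range (b1 b2 : ℕ → ℕ → Bool) (s n : ℕ)
    (h : ∀ i, s ≤ i → i + 1 < s + n → b1 i (i + 1) = b2 i (i + 1)) :
    cl b1 (range' s n) = cl b2 (range' s n) := by
  induction n generalizing s with
  | zero => rfl
  | succ n ih =>
    cases n with
    | zero => rfl
    | succ n =>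
      have := ih (s + 1) (fun i h1 h2 => h i (by omega) (by omega))
      simp only [range'_succ, cl] at this ⊢
      rw [this, h s le_rfl (by omega)]

theorem RS.desc {ρ P Q} (h : RS ρ P Q) (hr : IsReducedWord ρ) (f : ℕ → ℕ)
    (hf : ∀ z, 1 ≤ z → z ≤ ρ.length → f z = rowOf Q z) :
    cl (fun a b => decide (b ≤ a)) ρ =
      cl (fun a b => decide (f a ≤ f b)) (range' 1 ρ.length).reverse := by
  induction h with
  | nil => rfl
  | @cons ρ P Q P' x k h1 h2 ih =>
    have hk : f (ρ.length + 1) = k := by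
      rw [hf _ (by omega) (by simp), rowOf_appQ_self]
      intro hc
      have := (h1.mem_le _).1 hc
      omega
    have hf' : ∀ z, 1 ≤ z → z ≤ ρ.length → f z = rowOf Q z := by
      intro z hz1 hz2
      rw [hf z hz1 (by simp; omega), rowOf_appQ_other _ _ _ _ ((h1.mem_le _).2 ⟨hz1, hz2⟩) (by omega)]
    replace ih := ih (red_tail hr) hf'
    cases h1 with
    | nil => rfl
    | @cons ρ P Q P' y j h3 h4 =>
      have hj : f (ρ.length + 1) = j := by
        rw [hf' _ (by omega) (by simp), rowOf_appQ_self]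
        intro hc
        have := (h3.mem_le _).1 hc
        omega
      have e1 : (range' 1 (ρ.length + 1)).reverse = (ρ.length + 1) :: (range' 1 ρ.length).reverse := by
        rw [range'_concat]; simp; omega
      have e2 : (range' 1 (ρ.length + 1 + 1)).reverse =
          (ρ.length + 1 + 1) :: (range' 1 (ρ.length + 1)).reverse := by
        rw [range'_concat]; simp; omega
      simp only [length_cons] at ih hk ⊢
      rw [e2, e1, cl, ih, cl, e1, hk, hj]
      congr 1
      have hne := red_ne hr
      rcases lt_or_gt_of_ne hne with hlt | hlt
      · have := Ins.row_gt h3.tabP h4 h2 hlt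
        simp; omega
      · have := Ins.row_lt h3.tabP h4 h2 hlt
        simp; omega

theorem RS.desComp {ρ P Q} (h : RS ρ P Q) (hr : IsReducedWord ρ) (f : ℕ → ℕ)
    (hf : ∀ z, 1 ≤ z → z ≤ ρ.length → f z = rowOf Q z) :
    DesComp ρ = (splitWhen (fun a _ => decide (f (a + 1) ≤ f a)) (range' 1 ρ.length)).map
      List.length := by
  unfold DesComp rowsOf runs
  rw [map_reverse, cl_eq, cl_eq, h.desc hr f hf, cl_reverse, reverse_reverse]
  exact cl_congr_range _ _ _ _ (fun i _ _ => rfl)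

end EG

namespace EG

def zipCons : List ℕ → List (List ℕ) → List (List ℕ)
  | [], C => C
  | a :: r, [] => [a] :: zipCons r []
  | a :: r, c :: C => (a :: c) :: zipCons r C

def tr : List (List ℕ) → List (List ℕ)
  | [] => []
  | r :: R => zipCons r (tr R)

abbrev firsts (C : List (List ℕ)) : List ℕ := C.map (fun c => c.headD 0)

theorem firsts_zipCons {r : List ℕ} {C : List (List ℕ)} (h : C.length ≤ r.length) :
    firsts (zipCons r C) = r := by
  induction r generalizing C with
  | nil => cases C <;> simp_all [zipCons]
  | cons a r ih =>
    cases C with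
    | nil => have := ih (C := []) (by simp); simp only [zipCons, firsts, map_cons, headD_cons] at this ⊢; rw [this]
    | cons c C => have := ih (C := C) (by simpa using h); simp only [zipCons, firsts, map_cons, headD_cons] at this ⊢; rw [this]

theorem tab_min {r : List ℕ} {R : List (List ℕ)} (h : Tab (r :: R)) :
    (∀ z ∈ r, r.headD 0 ≤ z) ∧ ∀ z ∈ R.flatten, r.headD 0 < z := by
  induction R generalizing r with
  | nil =>
    cases r with
    | nil => simp
    | cons a r =>
      have := h.2.1
      simp [Srt] at this ⊢
      exact fun z hz => (this.1 z hz).le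
  | cons s R ih =>
    obtain ⟨h1, h2⟩ := ih h.2.2.2
    cases r with
    | nil => exact absurd rfl h.1
    | cons a r =>
      have h3 := h.2.1
      have h4 := h.2.2.1
      have h5 := h.2.2.2.1
      cases s with
      | nil => exact absurd rfl h5
      | cons b s =>
        simp only [headD_cons, cons_above] at h1 h2 h4 ⊢
        simp only [Srt, pairwise_cons] at h3
        constructor
        · intro z hz
          rcases mem_cons.1 hz with rfl | hz
          · exact le_rfl
          · exact (h3.1 z hz).le
        · intro z hz
          rw [flatten_cons, mem_append] at hz
          rcases hz with hz | hz
          · have := h1 z hz; omega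
          · have := h2 z hz; omega

theorem tab_zipCons {r : List ℕ} {C : List (List ℕ)} (hr : Srt r) (hC : Tab C)
    (ha : Above r (firsts C)) : Tab (zipCons r C) := by
  induction r generalizing C with
  | nil => exact hC
  | cons a r ih =>
    have hr' := hr
    simp only [Srt, pairwise_cons] at hr'
    cases C with
    | nil =>
      refine ⟨by simp, by simp, ?_, ih hr'.2 trivial (by simp)⟩
      cases r with
      | nil => simp [zipCons]
      | cons b r => simp [zipCons]; exact hr'.1 b (by simp)
    | cons c C =>
      simp only [firsts, map_cons, cons_above] at ha
      have hm := (tab_min hC).1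
      refine ⟨by simp, ?_, ?_, ih hr'.2 hC.2.2.2 ha.2⟩
      · simp only [Srt, pairwise_cons]
        exact ⟨fun z hz => lt_of_lt_of_le ha.1 (hm z hz), hC.2.1⟩
      · cases r with
        | nil =>
          cases C with
          | nil => simp [zipCons]
          | cons d D => simp at ha
        | cons b r =>
          have := hr'.1 b (by simp)
          have h2 := hC.2.2.1
          cases C with
          | nil => simp [zipCons, this]
          | cons d D => simp [zipCons, this] at h2 ⊢; exact h2

theorem tr_spec {T : List (List ℕ)} (h : Tab T) : Tab (tr T) ∧ firsts (tr T) = T.headD [] := by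
  induction T with
  | nil => exact ⟨trivial, rfl⟩
  | cons r R ih =>
    obtain ⟨h1, h2⟩ := ih h.2.2.2
    have h3 := h.2.2.1
    rw [← h2] at h3
    refine ⟨tab_zipCons h.2.1 h1 h3, firsts_zipCons ?_⟩
    simpa using above_len h3

theorem tr_len {r : List ℕ} {R : List (List ℕ)} (h : Tab (r :: R)) : (tr R).length ≤ r.length := by
  have h3 := h.2.2.1
  rw [← (tr_spec h.2.2.2).2] at h3
  simpa using above_len h3

theorem tr_zipCons {r : List ℕ} {C : List (List ℕ)} (hr : r ≠ []) (h : C.length ≤ r.length) :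
    tr (zipCons r C) = r :: tr C := by
  induction r generalizing C with
  | nil => simp at hr
  | cons a r ih =>
    cases r with
    | nil =>
      cases C with
      | nil => simp [zipCons, tr]
      | cons c C =>
        simp at h
        subst h
        simp [zipCons, tr]
    | cons b r =>
      cases C with
      | nil =>
        have := ih (C := []) (by simp) (by simp)
        change zipCons [a] (tr (zipCons (b :: r) [])) = _
        rw [this]
        simp [zipCons, tr]
      | cons c C =>
        have := ih (C := C) (by simp) (by simpa using h)
        rw [zipCons, tr, this]
        simp [zipCons, tr]

theorem tr_tr {T : List (List ℕ)} (h : Tab T) : tr (tr T) = T := by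
  induction T with
  | nil => rfl
  | cons r R ih => rw [tr, tr_zipCons h.1 (tr_len h), ih h.2.2.2]

theorem zipCons_perm (r : List ℕ) (C : List (List ℕ)) :
    (zipCons r C).flatten.Perm (r ++ C.flatten) := by
  induction r generalizing C with
  | nil => exact Perm.refl _
  | cons a r ih =>
    cases C with
    | nil => simpa [zipCons] using ih []
    | cons c C =>
      simp only [zipCons, flatten_cons, cons_append]
      refine Perm.cons _ (((ih C).append_left c).trans ?_)
      rw [← append_assoc, ← append_assoc]
      exact perm_append_comm.append_right _

theorem tr_perm (T : List (List ℕ)) : (tr T).flatten.Perm T.flatten := by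
  induction T with
  | nil => exact Perm.refl _
  | cons r R ih => exact (zipCons_perm _ _).trans (by simpa using ih.append_left r)

def zl : ℕ → List ℕ → List ℕ
  | 0, C => C
  | n + 1, [] => 1 :: zl n []
  | n + 1, c :: C => (c + 1) :: zl n C

def trl : List ℕ → List ℕ
  | [] => []
  | r :: R => zl r (trl R)

theorem zl_eq (r : List ℕ) (C : List (List ℕ)) :
    (zipCons r C).map List.length = zl r.length (C.map List.length) := by
  induction r generalizing C with
  | nil => rfl
  | cons a r ih => cases C <;> simp [zipCons, zl, ih]

theorem trl_eq (T : List (List ℕ)) : (tr T).map List.length = trl (T.map List.length) := by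
  induction T with
  | nil => rfl
  | cons r R ih => simp [tr, trl, zl_eq, ih]

theorem colOf_cons (c : List ℕ) (C : List (List ℕ)) (e : ℕ) :
    colOf (c :: C) e = if e ∈ c then c.findIdx (fun z => z == e) else colOf C e := by
  unfold colOf
  rw [rowOf_cons]
  split_ifs <;> simp

theorem colOf_zip_mem {r : List ℕ} {C : List (List ℕ)} {e : ℕ} (h : e ∈ r) (hC : e ∉ C.flatten) :
    colOf (zipCons r C) e = 0 := by
  induction r generalizing C with
  | nil => simp at h
  | cons a r ih =>
    cases C with
    | nil =>
      rw [zipCons, colOf_cons]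
      by_cases ha : a = e
      · simp [ha]
      · have : e ∈ r := by rcases mem_cons.1 h with h | h; · exact absurd h.symm ha
                           · exact h
        rw [if_neg (by simpa using fun h => ha h.symm), ih this hC]
    | cons c C =>
      rw [zipCons, colOf_cons]
      rw [flatten_cons, mem_append, not_or] at hC
      by_cases ha : a = e
      · simp [ha, findIdx_cons]
      · have : e ∈ r := by rcases mem_cons.1 h with h | h; · exact absurd h.symm ha
                           · exact h
        rw [if_neg (by simpa [hC.1] using fun h => ha h.symm), ih this hC.2]

theorem colOf_zip_not {r : List ℕ} {C : List (List ℕ)} {e : ℕ} (h : e ∉ r) (hC : e ∈ C.flatten)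
    (hl : C.length ≤ r.length) : colOf (zipCons r C) e = colOf C e + 1 := by
  induction r generalizing C with
  | nil => cases C <;> simp at hl hC
  | cons a r ih =>
    cases C with
    | nil => simp at hC
    | cons c C =>
      simp only [mem_cons, not_or] at h
      rw [flatten_cons, mem_append] at hC
      rw [zipCons, colOf_cons, colOf_cons]
      by_cases he : e ∈ c
      · have : (a == e) = false := by simpa using fun h' => h.1 h'.symm
        simp [he, findIdx_cons, this]
      · rw [if_neg (by simp [he, h.1]), if_neg he, ih h.2 (by tauto) (by simpa using hl)]

theorem colOf_tr {T : List (List ℕ)} {e : ℕ} (h : Tab T) (hn : T.flatten.Nodup)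
    (he : e ∈ T.flatten) : colOf (tr T) e = rowOf T e := by
  induction T with
  | nil => simp at he
  | cons r R ih =>
    rw [flatten_cons, nodup_append] at hn
    rw [flatten_cons, mem_append] at he
    rw [tr, rowOf_cons]
    split_ifs with hr
    · apply colOf_zip_mem hr
      rw [(tr_perm R).mem_iff]
      exact fun h' => hn.2.2 e hr e h' rfl
    · have hR : e ∈ R.flatten := by tauto
      rw [colOf_zip_not hr (by rwa [(tr_perm R).mem_iff]) (tr_len h), ih h.2.2.2 hn.2.1 hR]

theorem toPerm_zipCons {r : List ℕ} {C : List (List ℕ)} (hr : Srt r) (hC : Tab C)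
    (ha : Above r (firsts C)) : toPerm (wordOf (zipCons r C)) = toPerm (r.reverse ++ wordOf C) := by
  induction r generalizing C with
  | nil => rfl
  | cons a r ih =>
    have hr' := hr
    simp only [Srt, pairwise_cons] at hr'
    cases C with
    | nil =>
      rw [zipCons, wordOf_cons, toPerm_append, ih (C := []) hr'.2 trivial (by simp)]
      simp [wordOf_nil, toPerm_append]
    | cons c C =>
      simp only [firsts, map_cons, cons_above] at ha
      rw [zipCons, wordOf_cons, toPerm_append, ih hr'.2 hC.2.2.2 ha.2, wordOf_cons, reverse_cons]
      simp only [toPerm_append, toPerm_cons, toPerm_nil, mul_one]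
      have := toPerm_comm_gt (x := a) (b := wordOf C) (by
        intro z hz
        rw [mem_wordOf] at hz
        cases C with
        | nil => simp at hz
        | cons d D =>
          cases r with
          | nil => simp at ha
          | cons b r =>
            simp only [map_cons, cons_above] at ha
            have h1 := hr'.1 b (by simp)
            have h2 := tab_min hC.2.2.2
            have h3 : d.headD 0 ≤ z := by
              rw [flatten_cons, mem_append] at hz
              rcases hz with hz | hz
              · exact h2.1 z hz
              · exact (h2.2 z hz).le
            omega)
      simp only [mul_assoc]
      rw [← mul_assoc (toPerm (wordOf C)), this]
      simp only [mul_assoc]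

theorem toPerm_tr {T : List (List ℕ)} (h : Tab T) :
    toPerm (wordOf (tr T)) = toPerm (wordOf T).reverse := by
  induction T with
  | nil => rfl
  | cons r R ih =>
    have h3 := h.2.2.1
    rw [← (tr_spec h.2.2.2).2] at h3
    rw [tr, toPerm_zipCons h.2.1 (tr_spec h.2.2.2).1 h3, toPerm_append, ih h.2.2.2, wordOf_cons,
      reverse_append, toPerm_append]

theorem wordOf_perm (T : List (List ℕ)) : (wordOf T).Perm T.flatten := by
  unfold wordOf
  exact (reverse_perm T).flatten

theorem red_tr {T : List (List ℕ)} (h : Tab T) (hr : IsReducedWord (wordOf T)) :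
    IsReducedWord (wordOf (tr T)) := by
  have hp := ((wordOf_perm (tr T)).trans (tr_perm T)).trans (wordOf_perm T).symm
  refine red_of_eq (red_reverse hr) (fun i hi => hr.1 i (hp.mem_iff.1 hi)) (toPerm_tr h) ?_
  simpa using hp.length_eq

end EG

namespace EG

theorem above_iff (lo hi : List ℕ) : Above lo hi ↔
    (hi.length ≤ lo.length ∧ ∀ j < hi.length, lo.getD j 0 < hi.getD j 0) := by
  induction hi generalizing lo with
  | nil => simp
  | cons w s ih =>
    cases lo with
    | nil => simp
    | cons z r =>
      rw [cons_above, ih]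
      simp only [length_cons]
      constructor
      · rintro ⟨h1, h2, h3⟩
        refine ⟨by omega, fun j hj => ?_⟩
        cases j with
        | zero => simpa using h1
        | succ j => simpa using h3 j (by omega)
      · rintro ⟨h1, h2⟩
        refine ⟨by simpa using h2 0 (by omega), by omega, fun j hj => ?_⟩
        simpa using h2 (j + 1) (by omega)

theorem tab_iff (T : List (List ℕ)) : Tab T ↔ ((∀ r ∈ T, r.IsChain (· < ·)) ∧
    T.IsChain (fun lo hi => hi.length ≤ lo.length ∧
      ∀ j < hi.length, lo.getD j 0 < hi.getD j 0) ∧ [] ∉ T) := by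
  induction T with
  | nil => simp [Tab]
  | cons r R ih =>
    simp only [Tab, ih, mem_cons, not_or, forall_eq_or_imp, Srt, isChain_iff_pairwise (l := r)]
    cases R with
    | nil => simp; tauto
    | cons s R =>
      simp only [isChain_cons_cons, headD_cons, above_iff]
      have : r ≠ [] ↔ ¬ [] = r := by rw [ne_comm]
      rw [this]
      tauto

theorem split_append (brk : ℕ → ℕ → Bool) (u v : List ℕ)
    (h : ∀ a ∈ u, ∀ b ∈ v.head?, brk a b = true) :
    splitWhen brk (u ++ v) = splitWhen brk u ++ splitWhen brk v := by
  induction u with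
  | nil => rfl
  | cons a u ih =>
    have ih := ih (fun a ha => h a (by simp [ha]))
    cases u with
    | nil =>
      cases v with
      | nil => rfl
      | cons b v =>
        have := h a (by simp) b (by simp)
        simp only [cons_append, nil_append, splitWhen, this, if_true]
        cases h : splitWhen brk (b :: v) with
        | nil => exact absurd h (splitWhen_ne _ _ _)
        | cons r rs => simp
    | cons c u =>
      simp only [cons_append] at ih ⊢
      rw [splitWhen, splitWhen, ih]
      cases h : splitWhen brk (c :: u) with
      | nil => exact absurd h (splitWhen_ne _ _ _)
      | cons r rs => simp only [cons_append]; split_ifs <;> simp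

theorem runs_srt {r : List ℕ} (h : r ≠ []) (hs : Srt r) : runs r = [r] := by
  unfold runs
  induction r with
  | nil => simp at h
  | cons a r ih =>
    cases r with
    | nil => rfl
    | cons b r =>
      simp only [Srt, pairwise_cons] at hs
      have := ih (by simp) (by simp only [Srt, pairwise_cons]; exact hs.2)
      have h2 := hs.1 b (by simp)
      rw [splitWhen, this]
      simp; omega

theorem rowsOf_wordOf {T : List (List ℕ)} (h : Tab T) : rowsOf (wordOf T) = T := by
  induction T with
  | nil => rfl
  | cons r R ih =>
    have ih := ih h.2.2.2
    have h1 := tab_min h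
    unfold rowsOf at *
    rw [wordOf_cons]
    have : runs (wordOf R ++ r) = runs (wordOf R) ++ runs r := by
      apply split_append
      intro a ha b hb
      rw [mem_wordOf] at ha
      have := h1.2 a ha
      cases r with
      | nil => simp at hb
      | cons c r => simp at hb this ⊢; omega
    rw [this, runs_srt h.1 h.2.1, reverse_append, ih]
    simp

theorem split_flatten (brk : ℕ → ℕ → Bool) (l : List ℕ) : (splitWhen brk l).flatten = l := by
  induction l with
  | nil => rfl
  | cons a l ih =>
    cases l with
    | nil => rfl
    | cons b l =>
      rw [splitWhen]
      cases h : splitWhen brk (b :: l) with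
      | nil => exact absurd h (splitWhen_ne _ _ _)
      | cons r rs =>
        rw [h] at ih
        simp only
        split_ifs <;> simp [← ih]

theorem split_not_nil (brk : ℕ → ℕ → Bool) (l : List ℕ) : [] ∉ splitWhen brk l := by
  induction l with
  | nil => simp [splitWhen]
  | cons a l ih =>
    cases l with
    | nil => simp [splitWhen]
    | cons b l =>
      rw [splitWhen]
      cases h : splitWhen brk (b :: l) with
      | nil => simp
      | cons r rs =>
        rw [h] at ih
        simp only
        simp only [mem_cons, not_or] at ih
        split_ifs <;> simp [ih]

theorem wordOf_rowsOf (ρ : List ℕ) : wordOf (rowsOf ρ) = ρ := by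
  simp [wordOf, rowsOf, runs, split_flatten]

theorem young_iff (ρ : List ℕ) : IsIncreasingYoungRows (rowsOf ρ) ↔ Tab (rowsOf ρ) := by
  rw [tab_iff]
  have : [] ∉ rowsOf ρ := by
    unfold rowsOf runs
    rw [mem_reverse]
    exact split_not_nil _ _
  simp only [this, not_false_eq_true, and_true]
  rfl

theorem syt_iff (T : List (List ℕ)) : IsSYT T ↔
    Tab T ∧ T.flatten.Perm (range' 1 T.flatten.length) := by
  rw [tab_iff]
  unfold IsSYT
  simp only [and_assoc]
  rfl

end EG

namespace EG

theorem RS.toPerm_word {ρ P Q} (h : RS ρ P Q) : toPerm (wordOf (tr P)) = toPerm ρ := by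
  rw [toPerm_tr h.tabP, toPerm_reverse, h.perm, toPerm_reverse, inv_inv]

theorem RS.sytDes {ρ P Q} (h : RS ρ P Q) (hr : IsReducedWord ρ) : DesComp ρ = sytDes (tr Q) := by
  have hn : Q.flatten.Nodup := h.permQ.nodup_iff.2 (nodup_range' (s := 1) (n := ρ.length))
  have hl : (tr Q).flatten.length = ρ.length := by
    rw [(tr_perm Q).length_eq, h.permQ.length_eq, length_range']
  rw [h.desComp hr (colOf (tr Q)) (fun z h1 h2 => colOf_tr h.tabQ hn ((h.mem_le z).2 ⟨h1, h2⟩))]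
  unfold EG.sytDes
  rw [hl]

theorem stanley_aux (w : Equiv.Perm ℕ) :
    StanleySym w =
      ∑ᶠ ρ ∈ {ρ : List ℕ | ReducedWordFor ρ w ∧ IsIncreasingYoungRows (rowsOf ρ)},
        Schur (DesComp ρ) := by
  classical
  have hR := finite_R w
  have hY : {ρ : List ℕ | ReducedWordFor ρ w ∧ IsIncreasingYoungRows (rowsOf ρ)}.Finite :=
    hR.subset (fun ρ h => h.1)
  have hex : ∀ ρ : List ℕ, ∃ PQ : List (List ℕ) × List (List ℕ),
      IsReducedWord ρ → RS ρ PQ.1 PQ.2 := by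
    intro ρ
    by_cases h : IsReducedWord ρ
    · obtain ⟨P, Q, h1⟩ := RS.exists ρ h
      exact ⟨(P, Q), fun _ => h1⟩
    · exact ⟨([], []), fun h' => absurd h' h⟩
  choose PQ hPQ using hex
  let E : List ℕ → List ℕ := fun ρ => wordOf (tr (PQ ρ).1)
  have hrows : ∀ ρ, IsReducedWord ρ → rowsOf (E ρ) = tr (PQ ρ).1 := fun ρ h =>
    rowsOf_wordOf (tr_spec (hPQ ρ h).tabP).1
  unfold StanleySym
  rw [finsum_mem_eq_finite_toFinset_sum _ hR, finsum_mem_eq_finite_toFinset_sum _ hY]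
  rw [← Finset.sum_fiberwise_of_maps_to (s := hR.toFinset) (t := hY.toFinset) (g := E)]
  · apply Finset.sum_congr rfl
    intro σ hσ
    rw [Set.Finite.mem_toFinset] at hσ
    obtain ⟨⟨hσ1, hσ2⟩, hσ3⟩ := hσ
    rw [young_iff] at hσ3
    unfold Schur
    rw [← finsum_mem_coe_finset]
    refine finsum_mem_eq_of_bijOn (fun ρ => tr (PQ ρ).2) ⟨?_, ?_, ?_⟩ ?_
    · intro ρ hρ
      simp only [Finset.coe_filter, Set.Finite.mem_toFinset, Set.mem_ofPred_eq] at hρ ⊢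
      obtain ⟨⟨h1, h2⟩, h3⟩ := hρ
      have h := hPQ ρ h1
      constructor
      · rw [syt_iff]
        refine ⟨(tr_spec h.tabQ).1, ?_⟩
        have hp := (tr_perm (PQ ρ).2).trans h.permQ
        rw [hp.length_eq, length_range']
        exact hp
      · rw [trl_eq, ← h.lens, ← trl_eq, ← hrows ρ h1, h3, DesComp]
    · intro ρ hρ ρ' hρ' he
      simp only [Finset.coe_filter, Set.Finite.mem_toFinset, Set.mem_ofPred_eq] at hρ hρ' he
      obtain ⟨⟨h1, h2⟩, h3⟩ := hρ
      obtain ⟨⟨h1', h2'⟩, h3'⟩ := hρ'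
      have h := hPQ ρ h1
      have h' := hPQ ρ' h1'
      have eQ : (PQ ρ).2 = (PQ ρ').2 := by
        rw [← tr_tr h.tabQ, he, tr_tr h'.tabQ]
      have eP : (PQ ρ).1 = (PQ ρ').1 := by
        rw [← tr_tr h.tabP, ← hrows ρ h1, h3, ← h3', hrows ρ' h1', tr_tr h'.tabP]
      rw [eQ, eP] at h
      exact RS.det' h' h
    · intro T hT
      obtain ⟨hT1, hT2⟩ := hT
      rw [syt_iff] at hT1
      have tP := (tr_spec hσ3).1
      have rP : IsReducedWord (wordOf (tr (rowsOf σ))) :=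
        red_tr hσ3 (by rw [wordOf_rowsOf]; exact hσ1)
      obtain ⟨ρ, hl, hRS⟩ := RS.exists' T.flatten.length (tr (rowsOf σ)) (tr T) tP rP
        (tr_spec hT1.1).1 (by rw [trl_eq, trl_eq, hT2, DesComp]) ((tr_perm T).trans hT1.2)
      have hr : IsReducedWord ρ := hRS.red.2 rP
      obtain ⟨e1, e2⟩ := hRS.det (hPQ ρ hr)
      refine ⟨ρ, ?_, ?_⟩
      · simp only [Finset.coe_filter, Set.Finite.mem_toFinset, Set.mem_ofPred_eq]
        refine ⟨⟨hr, ?_⟩, ?_⟩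
        · rw [← hRS.toPerm_word, tr_tr hσ3, wordOf_rowsOf, hσ2]
        · simp only [E]
          rw [e1, tr_tr hσ3, wordOf_rowsOf]
      · simp only
        rw [e2, tr_tr hT1.1]
    · intro ρ hρ
      simp only [Finset.coe_filter, Set.Finite.mem_toFinset, Set.mem_ofPred_eq] at hρ
      rw [(hPQ ρ hρ.1.1).sytDes hρ.1.1]
  · intro ρ hρ
    rw [Set.Finite.mem_toFinset] at hρ ⊢
    have h := hPQ ρ hρ.1
    refine ⟨⟨red_tr h.tabP (h.red.1 hρ.1), h.toPerm_word.trans hρ.2⟩, ?_⟩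
    rw [young_iff, hrows ρ hρ.1]
    exact (tr_spec h.tabP).1

end EG

namespace EG

/-- For any permutation `w`, the Stanley symmetric function
satisfies `S_w = Σ s_{Des(ρ)}`, the sum over reduced words `ρ ∈ R(w)` whose descent
tableau `𝔻(ρ)` is an increasing Young tableau of partition shape. -/
theorem stanley_schur_expansion (w : Equiv.Perm ℕ) :
    StanleySym w =
      ∑ᶠ ρ ∈ {ρ : List ℕ | ReducedWordFor ρ w ∧ IsIncreasingYoungRows (rowsOf ρ)},
        Schur (DesComp ρ) := by
  exact stanley_aux w

end EG
end
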